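/- arXiv:0912.0405 — 2 statements merged into one kernel-verified Lean document; each statement's English description precedes it below -/
import Mathlib

section
/- Let n ≥ 2 and let α, β ∈ B_n. If α^M and β^M commute for some non-zero integer M, then α^{n!} and β^{n!} commute. -/
open FreeGroup in
/-- The braid relations on `m` strands (generators indexed 0-based by `Fin (m-1)`). -/
def braidRels (m : ℕ) : Set (FreeGroup (Fin (m - 1))) :=
  {r | ∃ i j : Fin (m - 1), (i.val + 2 ≤ j.val ∨ j.val + 2 ≤ i.val) ∧
        r = of i * of j * (of j * of i)⁻¹} ∪
  {r | ∃ i j : Fin (m - 1), (i.val + 1 = j.val ∨ j.val + 1 = i.val) ∧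
        r = of i * of j * of i * (of j * of i * of j)⁻¹}

/-- The braid group on `m` strands. -/
abbrev BraidGroup (m : ℕ) := PresentedGroup (braidRels m)

/-- The Artin generator `σ_i` (1-based index `1 ≤ i ≤ m-1`); junk value `1` out of range. -/
def braidGen (m : ℕ) (i : ℕ) : BraidGroup m :=
  if h : 1 ≤ i ∧ i ≤ m - 1 then PresentedGroup.of ⟨i - 1, by omega⟩ else 1

/-- A braid is periodic if some positive power of it is central. -/
def IsPeriodic {m : ℕ} (β : BraidGroup m) : Prop :=
  ∃ k : ℕ, 1 ≤ k ∧ β ^ k ∈ Subgroup.center (BraidGroup m)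

/-- The elementary Hurwitz move at (0-based) position `i`, as a bijection on `n`-tuples. -/
def hEquiv {G : Type*} [Group G] {n : ℕ} (i : Fin (n - 1)) : Equiv.Perm (Fin n → G) where
  toFun s := fun k =>
    if k.val = i.val then s ⟨i.val + 1, by have := i.isLt; omega⟩
    else if k.val = i.val + 1 then
      (s ⟨i.val + 1, by have := i.isLt; omega⟩)⁻¹ * s ⟨i.val, by have := i.isLt; omega⟩ *
        s ⟨i.val + 1, by have := i.isLt; omega⟩
    else s k
  invFun t := fun k =>
    if k.val = i.val then
      t ⟨i.val, by have := i.isLt; omega⟩ * t ⟨i.val + 1, by have := i.isLt; omega⟩ *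
        (t ⟨i.val, by have := i.isLt; omega⟩)⁻¹
    else if k.val = i.val + 1 then t ⟨i.val, by have := i.isLt; omega⟩
    else t k
  left_inv s := by
    funext k
    have hlt := i.isLt
    rcases k with ⟨kv, hkv⟩
    by_cases h1 : kv = i.val
    · subst h1
      simp [mul_assoc]
    · by_cases h2 : kv = i.val + 1
      · subst h2
        simp
      · simp [h1, h2]
  right_inv t := by
    funext k
    have hlt := i.isLt
    rcases k with ⟨kv, hkv⟩
    by_cases h1 : kv = i.val
    · subst h1
      simp [mul_assoc]
    · by_cases h2 : kv = i.val + 1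
      · subst h2
        simp [mul_assoc]
      · simp [h1, h2]

/-- The (right) Hurwitz action of a word in the generators `σ_1, …, σ_{n-1}` of `B_n`
on `n`-tuples of elements of a group `G`: `hurwitzAct (w₁ * w₂) s = hurwitzAct w₂ (hurwitzAct w₁ s)`. -/
def hurwitzAct {G : Type*} [Group G] {n : ℕ} (w : FreeGroup (Fin (n - 1))) (s : Fin n → G) :
    Fin n → G :=
  (MulOpposite.unop (FreeGroup.lift (fun i => MulOpposite.op (hEquiv (G := G) (n := n) i)) w)) s

/-- The Hurwitz orbit of a braid system. -/
def hurwitzOrbit {G : Type*} [Group G] {n : ℕ} (s : Fin n → G) : Set (Fin n → G) :=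
  {t | ∃ w : FreeGroup (Fin (n - 1)), hurwitzAct w s = t}

/-- The generator `σ_i` (1-based) as a word acting on length-`n` systems. -/
def genWord (n : ℕ) (i : ℕ) : FreeGroup (Fin (n - 1)) :=
  if h : 1 ≤ i ∧ i ≤ n - 1 then FreeGroup.of ⟨i - 1, by omega⟩ else 1

/-- The pure braid word `c_i = (σ_1⁻¹ ⋯ σ_{i-1}⁻¹) σ_i² (σ_{i-1} ⋯ σ_1)`. -/
def cWord (n : ℕ) (i : ℕ) : FreeGroup (Fin (n - 1)) :=
  ((List.range (i - 1)).map (fun t => (genWord n (t + 1))⁻¹)).prod *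
    genWord n i ^ 2 *
    ((List.range (i - 1)).reverse.map (fun t => genWord n (t + 1))).prod

/-- The word `Δ_{(i,j)} = (σ_i σ_{i+1} ⋯ σ_j)(σ_i ⋯ σ_{j-1}) ⋯ (σ_i σ_{i+1})(σ_i)`. -/
def deltaWord (n i j : ℕ) : FreeGroup (Fin (n - 1)) :=
  ((List.range (j - i + 1)).map (fun t =>
    ((List.range (j - t - i + 1)).map (fun u => genWord n (i + u))).prod)).prod

/-- The exponent-sum homomorphism, valued in `Multiplicative ℤ`. -/
def expSumHom {m : ℕ} : BraidGroup m →* Multiplicative ℤ :=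
  PresentedGroup.toGroup (f := fun _ => Multiplicative.ofAdd 1) (by
    rintro r (⟨i, j, -, rfl⟩ | ⟨i, j, -, rfl⟩) <;>
      simp <;> group)

/-- The exponent sum of a braid: `e(σ_i) = 1`. -/
def esum {m : ℕ} (β : BraidGroup m) : ℤ := Multiplicative.toAdd (expSumHom β)

/-- A braid system is reducible if some non-trivial partition of the index set has all
entries from the two parts commuting. -/
def IsReducible {G : Type*} [Group G] {n : ℕ} (s : Fin n → G) : Prop :=
  ∃ I : Set (Fin n), I.Nonempty ∧ Iᶜ.Nonempty ∧ ∀ i ∈ I, ∀ j ∈ Iᶜ, Commute (s i) (s j)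

/-!
In a group with unique roots, if `a ^ M` and `b ^ M` commute then so do `a` and `b`: the conjugate
of `a` by `b ^ M` has the same `M`-th power as `a`, hence `a` commutes with `b ^ M`, and the same
argument removes the second exponent. The `n!`-th power of a braid is pure, so it is enough to show
that the pure braid group has unique roots.

Artin's representation embeds the braid group into the automorphisms of a free group `F`, and sends
pure braids to automorphisms acting trivially on the abelianization of `F`. Such an automorphism
acts on `ℚ[F]` as the identity plus an operator moving each power `I ^ k` of the augmentation
ideal into `I ^ (k + 1)`. If two operators `a`, `b` of this kind have the same `m`-th power, then
`a - b` has degree at least `k` for all `k`, because `a ^ m - b ^ m` agrees with `m (a - b)` up to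
terms of higher degree. By Magnus, the only `g` in `F` with `g - 1 ∈ ⋂ I ^ k` is the
identity, so `a = b`.

Faithfulness of Artin's representation is proved by combing: a braid is a product `u h c`, where
`c` carries the last strand to its place, `h` involves only the other strands, and `u` moves only
the last strand. If the braid acts trivially, deleting the last free generator shows that `c` and
`h` are trivial, and `u` can be read off from the word by which it conjugates that generator.
-/

section FilteredAlgebra

variable {K A : Type*} [CommRing K] [Ring A] [Algebra K A]
  {E : ℕ → Submodule K A} [SetLike.GradedMonoid E] {a b : A}

theorem mul_sub_one_mem_one (hE : Antitone E) (ha : a - 1 ∈ E 1) (hb : b - 1 ∈ E 1) :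
    a * b - 1 ∈ E 1 := by
  have key : a * b - 1 = (a - 1) * (b - 1) + ((a - 1) + (b - 1)) := by noncomm_ring
  rw [key]
  exact add_mem (hE one_le_two (SetLike.mul_mem_graded ha hb)) (add_mem ha hb)

theorem pow_sub_one_mem_one (hE : Antitone E) (hb : b - 1 ∈ E 1) (m : ℕ) : b ^ m - 1 ∈ E 1 := by
  induction m with
  | zero => simp
  | succ m ih => exact pow_succ b m ▸ mul_sub_one_mem_one hE ih hb

theorem pow_sub_pow_sub_nsmul_mem_succ (hE : Antitone E) (ha : a - 1 ∈ E 1) (hb : b - 1 ∈ E 1)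
    {k : ℕ} (hab : a - b ∈ E k) (m : ℕ) : a ^ m - b ^ m - m • (a - b) ∈ E (k + 1) := by
  induction m with
  | zero => simp
  | succ m ih =>
    have key : a ^ (m + 1) - b ^ (m + 1) - (m + 1) • (a - b) =
        (a ^ m - b ^ m - m • (a - b)) * (a - 1) + (a ^ m - b ^ m - m • (a - b)) +
          m • ((a - b) * (a - 1)) + (b ^ m - 1) * (a - b) := by
      simp only [pow_succ, succ_nsmul, sub_mul, mul_sub, mul_one, one_mul, smul_mul_assoc, smul_sub]
      abel
    have hD : (a - b) * (a - 1) ∈ E (k + 1) := SetLike.mul_mem_graded hab ha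
    have hD' : (b ^ m - 1) * (a - b) ∈ E (k + 1) := by
      simpa only [add_comm] using SetLike.mul_mem_graded (pow_sub_one_mem_one hE hb m) hab
    rw [key]
    exact add_mem (add_mem (add_mem (hE (by lia) (SetLike.mul_mem_graded ih ha)) ih)
      (nsmul_mem hD m)) hD'

theorem sub_mem_of_pow_eq_pow {K : Type*} [Field K] [CharZero K] [Algebra K A]
    {E : ℕ → Submodule K A} [SetLike.GradedMonoid E] (hE : Antitone E) (ha : a - 1 ∈ E 1)
    (hb : b - 1 ∈ E 1) {m : ℕ} (hm : m ≠ 0) (h : a ^ m = b ^ m) (k : ℕ) : a - b ∈ E k := by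
  have h1 : a - b ∈ E 1 := by simpa using sub_mem ha hb
  induction k with
  | zero => exact hE zero_le_one h1
  | succ k ih =>
    have hmab : m • (a - b) ∈ E (k + 1) := by
      simpa [h] using pow_sub_pow_sub_nsmul_mem_succ hE ha hb ih m
    rwa [← Nat.cast_smul_eq_nsmul K, Submodule.smul_mem_iff _ (Nat.cast_ne_zero.2 hm)] at hmab

end FilteredAlgebra

section FiltrationShift

variable {K V : Type*} [CommRing K] [AddCommGroup V] [Module K V]

/-- The linear endomorphisms which raise the degree by at least `k` with respect to the
filtration `W`. -/
def filtrationShift (W : ℕ → Submodule K V) (k : ℕ) : Submodule K (Module.End K V) where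
  carrier := {T | ∀ j, ∀ x ∈ W j, T x ∈ W (j + k)}
  add_mem' hS hT j x hx := add_mem (hS j x hx) (hT j x hx)
  zero_mem' j _ _ := zero_mem (W (j + k))
  smul_mem' c _ hT j x hx := (W (j + k)).smul_mem c (hT j x hx)

instance (W : ℕ → Submodule K V) : SetLike.GradedMonoid (filtrationShift W) where
  one_mem _ _ hx := hx
  mul_mem k l S T hS hT j x hx := by
    simpa only [add_assoc, add_comm l k, Module.End.mul_apply] using hS (j + l) (T x) (hT j x hx)

theorem antitone_filtrationShift {W : ℕ → Submodule K V} (hW : Antitone W) :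
    Antitone (filtrationShift W) :=
  fun _ _ hkl _ hT j x hx => hW (Nat.add_le_add_left hkl j) (hT j x hx)

end FiltrationShift

section AugmentationIdeal

open MonoidAlgebra

variable (K G : Type*) [CommRing K] [Group G]

/-- The augmentation ideal of the group algebra `K[G]`: the elements whose coefficients sum to
`0`. -/
noncomputable def augmentationIdeal : Ideal (MonoidAlgebra K G) :=
  RingHom.ker (MonoidAlgebra.lift K K G 1)

instance : (augmentationIdeal K G).IsTwoSided :=
  inferInstanceAs (RingHom.ker _).IsTwoSided

variable {K G}

theorem of_sub_one_mem_augmentationIdeal (g : G) : of K G g - 1 ∈ augmentationIdeal K G := by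
  simp [augmentationIdeal, RingHom.mem_ker]

theorem mul_mem_augmentationIdeal_pow_add {x y : MonoidAlgebra K G} {j k : ℕ}
    (hx : x ∈ augmentationIdeal K G ^ j) (hy : y ∈ augmentationIdeal K G ^ k) :
    x * y ∈ augmentationIdeal K G ^ (j + k) :=
  Ideal.IsTwoSided.pow_add (I := augmentationIdeal K G) j k ▸ Ideal.mul_mem_mul hx hy

theorem of_sub_of_mem_iff {J : Ideal (MonoidAlgebra K G)} [J.IsTwoSided] {g h : G} :
    of K G g - of K G h ∈ J ↔ of K G (g / h) - 1 ∈ J := by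
  have key : of K G (g / h) - 1 = (of K G g - of K G h) * of K G h⁻¹ := by
    rw [sub_mul, ← map_mul, ← map_mul, mul_inv_cancel, map_one, div_eq_mul_inv]
  refine ⟨fun hJ => key ▸ J.mul_mem_right _ hJ, fun hJ => ?_⟩
  have := J.mul_mem_right (of K G h) hJ
  rwa [sub_mul, one_mul, ← map_mul, div_mul_cancel] at this

open scoped commutatorElement in
theorem of_commutatorElement_sub_one (g h : G) :
    of K G ⁅g, h⁆ - 1 = ((of K G g - 1) * (of K G h - 1) - (of K G h - 1) * (of K G g - 1)) *
      of K G (h * g)⁻¹ := by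
  have key : (of K G g - 1) * (of K G h - 1) - (of K G h - 1) * (of K G g - 1) =
      of K G (g * h) - of K G (h * g) := by
    simp only [map_mul]; noncomm_ring
  rw [key, sub_mul, ← map_mul, ← map_mul, mul_inv_cancel, map_one, commutatorElement_def]
  group

theorem of_sub_one_mem_augmentationIdeal_sq {g : G} (hg : g ∈ commutator G) :
    of K G g - 1 ∈ augmentationIdeal K G ^ 2 := by
  let π : G →* MonoidAlgebra K G ⧸ augmentationIdeal K G ^ 2 :=
    (Ideal.Quotient.mk (augmentationIdeal K G ^ 2) : _ →* _).comp (of K G)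
  have hπ (g : G) : g ∈ π.ker ↔ of K G g - 1 ∈ augmentationIdeal K G ^ 2 :=
    Ideal.Quotient.mk_eq_mk_iff_sub_mem (of K G g) 1
  have hle : commutator G ≤ π.ker := by
    refine Subgroup.commutator_le.2 fun g _ h _ => (hπ _).2 ?_
    rw [of_commutatorElement_sub_one]
    refine Ideal.mul_mem_right _ _ (sub_mem ?_ ?_) <;>
    · rw [Submodule.pow_succ, Submodule.pow_one]
      exact Ideal.mul_mem_mul (of_sub_one_mem_augmentationIdeal _)
        (of_sub_one_mem_augmentationIdeal _)
  exact (hπ g).1 (hle hg)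

variable (K G) in
/-- The powers of the augmentation ideal, as a filtration of the vector space `K[G]`. -/
noncomputable def augmentationFiltration (k : ℕ) : Submodule K (MonoidAlgebra K G) :=
  (augmentationIdeal K G ^ k).restrictScalars K

theorem antitone_augmentationFiltration : Antitone (augmentationFiltration K G) :=
  fun _ _ hjk _ hx => Ideal.pow_le_pow_right hjk hx

section Lift

variable {A : Type*} [Ring A] [Algebra K A] {E : ℕ → Submodule K A} {ρ : G →* A}

theorem lift_sub_smul_one_mem_one (hρ : ∀ g, ρ g - 1 ∈ E 1) (x : MonoidAlgebra K G) :
    MonoidAlgebra.lift K A G ρ x - MonoidAlgebra.lift K K G 1 x • (1 : A) ∈ E 1 := by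
  induction x using MonoidAlgebra.induction_on with
  | of g => simpa using hρ g
  | add x y hx hy => simpa only [map_add, add_smul, add_sub_add_comm] using add_mem hx hy
  | smul c x hx => simpa only [map_smul, smul_assoc, smul_sub] using (E 1).smul_mem c hx

theorem lift_mem_of_mem_augmentationIdeal_pow [SetLike.GradedMonoid E] (hE : Antitone E)
    (hρ : ∀ g, ρ g - 1 ∈ E 1) {k : ℕ} {x : MonoidAlgebra K G} (hx : x ∈ augmentationIdeal K G ^ k) :
    MonoidAlgebra.lift K A G ρ x ∈ E k := by
  have hshift := lift_sub_smul_one_mem_one hρ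
  induction k generalizing x with
  | zero =>
    have h1 := (E 0).smul_mem (MonoidAlgebra.lift K K G 1 x) (SetLike.one_mem_graded E)
    simpa using add_mem (hE zero_le_one (hshift x)) h1
  | succ k ih =>
    rw [Submodule.pow_succ] at hx
    refine Submodule.mul_induction_on hx (fun y hy z hz => ?_) fun y z hy hz => ?_
    · rw [map_mul]
      refine SetLike.mul_mem_graded (ih hy) ?_
      simpa [RingHom.mem_ker.1 hz] using hshift z
    · simpa only [map_add] using add_mem hy hz

end Lift

end AugmentationIdeal

section IAAutomorphisms

open MonoidAlgebra

variable {G : Type*} [Group G]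

variable (G) in
/-- The subgroup of IA automorphisms: those acting trivially on the abelianization. -/
def iaAut : Subgroup (MulAut G) where
  carrier := {f | ∀ g, Abelianization.of (f g) = Abelianization.of g}
  one_mem' _ := rfl
  mul_mem' hf hf' g := (hf _).trans (hf' g)
  inv_mem' {f} hf g := by simpa using (hf (f⁻¹ g)).symm

variable (K : Type*) [CommRing K]

/-- The linear action of the automorphisms of `G` on the group algebra `K[G]`. -/
noncomputable def autEnd : MulAut G →* Module.End K (MonoidAlgebra K G) where
  toFun f := (domCongrAut (R := K) (A := K) f).toLinearMap
  map_one' := by rw [map_one]; rfl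
  map_mul' f f' := by rw [map_mul]; rfl

variable {K}

@[simp]
theorem autEnd_of (f : MulAut G) (g : G) : autEnd K f (of K G g) = of K G (f g) := by
  simp [autEnd]

theorem autEnd_mul (f : MulAut G) (x y : MonoidAlgebra K G) :
    autEnd K f (x * y) = autEnd K f x * autEnd K f y :=
  map_mul (domCongrAut (R := K) (A := K) f) x y

theorem autEnd_sub_self_mem_sq {f : MulAut G} (hf : f ∈ iaAut G) (x : MonoidAlgebra K G) :
    autEnd K f x - x ∈ augmentationIdeal K G ^ 2 := by
  induction x using MonoidAlgebra.induction_on with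
  | of g =>
    rw [autEnd_of, of_sub_of_mem_iff]
    refine of_sub_one_mem_augmentationIdeal_sq ?_
    rw [← Abelianization.ker_of, MonoidHom.mem_ker, map_div, hf g, div_self']
  | add x y hx hy => simpa only [map_add, add_sub_add_comm] using add_mem hx hy
  | smul c x hx =>
    simpa only [map_smul, smul_sub] using Submodule.smul_of_tower_mem _ c hx

theorem autEnd_sub_one_mem_filtrationShift {f : MulAut G} (hf : f ∈ iaAut G) :
    autEnd K f - 1 ∈ filtrationShift (augmentationFiltration K G) 1 := by
  intro j
  induction j with
  | zero =>
    exact fun x _ => Ideal.pow_le_pow_right one_le_two (autEnd_sub_self_mem_sq hf x)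
  | succ j ih =>
    intro x hx
    change x ∈ augmentationIdeal K G ^ (j + 1) at hx
    rw [Submodule.pow_succ] at hx
    refine Submodule.mul_induction_on hx (fun y hy z hz => ?_) fun y z hy hz => ?_
    · have key : (autEnd K f - 1) (y * z) =
          (autEnd K f y - y) * autEnd K f z + y * (autEnd K f z - z) := by
        rw [LinearMap.sub_apply, autEnd_mul, Module.End.one_apply]
        noncomm_ring
      have hfz : autEnd K f z ∈ augmentationIdeal K G ^ 1 := by
        have := Ideal.pow_le_pow_right one_le_two (autEnd_sub_self_mem_sq hf z)
        rw [Submodule.pow_one] at this ⊢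
        simpa using add_mem this hz
      rw [key]
      exact add_mem (mul_mem_augmentationIdeal_pow_add (ih y hy) hfz)
        (mul_mem_augmentationIdeal_pow_add (j := j) (k := 2) hy (autEnd_sub_self_mem_sq hf z))
    · simpa only [map_add] using add_mem hy hz

theorem isMulTorsionFree_iaAut {K : Type*} [Field K] [CharZero K]
    (hG : ∀ g : G, (∀ k, of K G g - 1 ∈ augmentationIdeal K G ^ k) → g = 1) :
    IsMulTorsionFree (iaAut G) where
  pow_left_injective m hm f f' hff' := by
    have hpow : autEnd K f.1 ^ m = autEnd K f'.1 ^ m := by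
      simpa using congrArg (fun f : iaAut G => autEnd K f.1) hff'
    have hsub := sub_mem_of_pow_eq_pow (antitone_filtrationShift antitone_augmentationFiltration)
      (autEnd_sub_one_mem_filtrationShift f.2) (autEnd_sub_one_mem_filtrationShift f'.2) hm hpow
    ext g
    refine div_eq_one.1 (hG _ fun k => ?_)
    have := hsub k 0 (of K G g) (by simp [augmentationFiltration, Submodule.pow_zero])
    rw [zero_add, LinearMap.sub_apply, autEnd_of, autEnd_of] at this
    exact of_sub_of_mem_iff.1 this

end IAAutomorphisms

section MagnusRepresentation

variable {α : Type*}

/-- The power series all of whose terms have degree at least `k`. -/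
def degreeFiltration (α : Type*) (k : ℕ) : Submodule ℚ (List α → ℚ) where
  carrier := {f | ∀ l : List α, l.length < k → f l = 0}
  add_mem' hf hg l hl := by simp [hf l hl, hg l hl]
  zero_mem' _ _ := rfl
  smul_mem' c f hf l hl := by simp [hf l hl]

theorem antitone_degreeFiltration : Antitone (degreeFiltration α) :=
  fun _ _ hjk _ hf l hl => hf l (hl.trans_le hjk)

theorem eq_zero_of_forall_mem_degreeFiltration {f : List α → ℚ}
    (hf : ∀ k, f ∈ degreeFiltration α k) : f = 0 :=
  funext fun l => hf (l.length + 1) l l.length.lt_succ_self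

/-- `l` is the only word of length at least `l.length` without two equal consecutive letters
whose coefficient in `f` is nonzero. -/
structure IsLeadingWord (f : List α → ℚ) (l : List α) : Prop where
  isChain : l.IsChain (· ≠ ·)
  apply_ne_zero : f l ≠ 0
  apply_eq_zero : ∀ l' : List α, l'.IsChain (· ≠ ·) → l.length ≤ l'.length → l' ≠ l → f l' = 0

variable [DecidableEq α]

/-- Left multiplication by the variable `a`, in the ring of noncommutative power series with
variables in `α`; a power series is given by its coefficients, indexed by words. -/
def mulVar (a : α) : Module.End ℚ (List α → ℚ) where
  toFun f
    | [] => 0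
    | b :: l => if b = a then f l else 0
  map_add' f g := by ext (_ | ⟨b, l⟩) <;> simp [ite_add_zero]
  map_smul' c f := by ext (_ | ⟨b, l⟩) <;> simp

@[simp]
theorem mulVar_nil (a : α) (f : List α → ℚ) : mulVar a f [] = 0 := rfl

@[simp]
theorem mulVar_cons (a b : α) (f : List α → ℚ) (l : List α) :
    mulVar a f (b :: l) = if b = a then f l else 0 := rfl

/-- The coefficients of `(1 + a)⁻¹ f = f - a (1 + a)⁻¹ f`. -/
def oneAddVarInv (a : α) (f : List α → ℚ) : List α → ℚ
  | [] => f []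
  | b :: l => f (b :: l) - if b = a then oneAddVarInv a f l else 0

/-- Left multiplication by `1 + a`, the Magnus image of the generator `a`. -/
def oneAddVar (a : α) : (List α → ℚ) ≃ₗ[ℚ] (List α → ℚ) where
  __ := 1 + mulVar a
  invFun := oneAddVarInv a
  left_inv f := by
    ext l
    induction l with
    | nil => simp [oneAddVarInv]
    | cons b l ih =>
      simp only [oneAddVarInv, ih]
      simp
  right_inv f := by
    ext (_ | ⟨b, l⟩) <;> simp [oneAddVarInv]

/-- The Magnus representation of the free group, sending the generator `a` to `1 + a`. -/
def magnus : FreeGroup α →* ((List α → ℚ) ≃ₗ[ℚ] (List α → ℚ)) :=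
  FreeGroup.lift oneAddVar

theorem magnus_of_zpow_add_one (a : α) (e : ℤ) (f : List α → ℚ) :
    magnus (FreeGroup.of a ^ (e + 1)) f =
      magnus (FreeGroup.of a ^ e) f + mulVar a (magnus (FreeGroup.of a ^ e) f) := by
  rw [add_comm, zpow_one_add, map_mul, magnus, FreeGroup.lift_apply_of]
  rfl

theorem magnus_of_zpow_apply (a : α) (e : ℤ) (f : List α → ℚ) {l : List α}
    (hl : l.head? ≠ some a) : magnus (FreeGroup.of a ^ e) f l = f l := by
  have hstep (g : List α → ℚ) : mulVar a g l = 0 := by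
    cases l <;> simp_all
  induction e using Int.induction_on with
  | zero => simp
  | succ n ih => rw [magnus_of_zpow_add_one, Pi.add_apply, ih, hstep, add_zero]
  | pred n ih =>
    have := congrFun (magnus_of_zpow_add_one a (-n - 1) f) l
    rwa [sub_add_cancel, ih, Pi.add_apply, hstep, add_zero, eq_comm] at this

theorem magnus_of_zpow_apply_cons (a : α) (e : ℤ) (f : List α → ℚ) {l : List α}
    (hl : l.head? ≠ some a) :
    magnus (FreeGroup.of a ^ e) f (a :: l) = f (a :: l) + e * f l := by
  have hstep (e : ℤ) : magnus (FreeGroup.of a ^ (e + 1)) f (a :: l) =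
      magnus (FreeGroup.of a ^ e) f (a :: l) + f l := by
    rw [magnus_of_zpow_add_one, Pi.add_apply, mulVar_cons, if_pos rfl,
      magnus_of_zpow_apply a e f hl]
  induction e using Int.induction_on with
  | zero => simp
  | succ n ih => rw [hstep, ih]; push_cast; ring
  | pred n ih =>
    have := hstep (-n - 1)
    rw [sub_add_cancel, ih] at this
    push_cast at this ⊢
    linarith

theorem IsLeadingWord.cons {f : List α → ℚ} {l : List α} (hf : IsLeadingWord f l) {a : α}
    (hl : l.head? ≠ some a) {e : ℤ} (he : e ≠ 0) :
    IsLeadingWord (magnus (FreeGroup.of a ^ e) f) (a :: l) where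
  isChain := hf.isChain.cons fun b hb hab => hl (hab ▸ hb)
  apply_ne_zero := by
    have hchain : (a :: l).IsChain (· ≠ ·) := hf.isChain.cons fun b hb hab => hl (hab ▸ hb)
    rw [magnus_of_zpow_apply_cons a e f hl, hf.apply_eq_zero _ hchain (by simp) (by simp), zero_add]
    exact mul_ne_zero (Int.cast_ne_zero.2 he) hf.apply_ne_zero
  apply_eq_zero l' hl' hlen hne := by
    have hlt : l.length < l'.length := hlen
    have hfl' : f l' = 0 := hf.apply_eq_zero l' hl' hlt.le (by rintro rfl; exact hlt.ne rfl)
    by_cases hl'a : l'.head? = some a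
    · obtain ⟨t, rfl⟩ := List.head?_eq_some_iff.1 hl'a
      have hta : t.head? ≠ some a := fun h => by
        obtain ⟨u, rfl⟩ := List.head?_eq_some_iff.1 h
        simp at hl'
      rw [magnus_of_zpow_apply_cons a e f hta, hfl',
        hf.apply_eq_zero t hl'.tail (by simpa using hlen) (by rintro rfl; exact hne rfl)]
      simp
    · rw [magnus_of_zpow_apply a e f hl'a, hfl']

open Monoid.CoprodI in
theorem isLeadingWord_magnus_single (w : Word fun _ : α => FreeGroup Unit) :
    IsLeadingWord (magnus (freeGroupEquivCoprodI.symm w.prod) (Pi.single [] 1))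
      (w.toList.map Sigma.fst) := by
  induction w using Word.consRecOn with
  | empty =>
    refine ⟨by simp, by simp, fun l' _ _ hl' => ?_⟩
    simpa using Pi.single_eq_of_ne (by simpa using hl') _
  | cons a m w hw hm ih =>
    obtain ⟨e, rfl⟩ := FreeGroup.freeGroupUnitEquivInt.symm.surjective m
    have he : e ≠ 0 := by rintro rfl; exact hm (zpow_zero _)
    have hof : freeGroupEquivCoprodI.symm (Monoid.CoprodI.of (i := a)
        (FreeGroup.freeGroupUnitEquivInt.symm e)) = FreeGroup.of a ^ e := by
      simp [FreeGroup.freeGroupUnitEquivInt]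
    rw [Word.prod_cons, map_mul, map_mul, hof]
    refine ih.cons (fun h => hw ?_) he
    simpa [Word.fstIdx] using h

open Monoid.CoprodI in
theorem magnus_injective : Function.Injective (magnus (α := α)) := by
  refine (injective_iff_map_eq_one magnus).2 fun g hg => ?_
  obtain ⟨w, hw⟩ := Word.equiv.symm.surjective (freeGroupEquivCoprodI g)
  have hgw : g = freeGroupEquivCoprodI.symm w.prod :=
    (freeGroupEquivCoprodI.symm_apply_eq.2 hw).symm
  have hlead := (isLeadingWord_magnus_single w).apply_ne_zero
  rw [← hgw, hg] at hlead
  have hnil : w.toList = [] := by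
    by_contra hne
    exact hlead (Pi.single_eq_of_ne (by simpa using hne) _)
  rw [hgw, Word.prod, hnil, List.map_nil, List.prod_nil, map_one]

theorem mulVar_mem_filtrationShift (a : α) :
    mulVar a ∈ filtrationShift (degreeFiltration α) 1 := by
  rintro j f hf (_ | ⟨b, l⟩) hl
  · rfl
  · simp [hf l (by simpa using hl)]

theorem oneAddVar_symm_mem_degreeFiltration (a : α) {k : ℕ} {f : List α → ℚ}
    (hf : f ∈ degreeFiltration α k) : (oneAddVar a).symm f ∈ degreeFiltration α k := by
  intro l hl
  change oneAddVarInv a f l = 0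
  induction l with
  | nil => exact hf [] hl
  | cons b l ih => simp [oneAddVarInv, hf _ hl, ih ((Nat.lt_succ_self _).trans hl)]

/-- The linear maps underlying the Magnus representation. -/
def magnusEnd (α : Type*) [DecidableEq α] : FreeGroup α →* Module.End ℚ (List α → ℚ) :=
  (LinearEquiv.automorphismGroup.toLinearMapMonoidHom).comp magnus

theorem magnusEnd_sub_one_mem_filtrationShift (g : FreeGroup α) :
    magnusEnd α g - 1 ∈ filtrationShift (degreeFiltration α) 1 := by
  have hof (a : α) : magnusEnd α (FreeGroup.of a) = 1 + mulVar a := by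
    ext1 f; simp [magnusEnd, magnus, oneAddVar]
  induction g using FreeGroup.induction_on with
  | C1 => simp
  | of a => simpa [hof] using mulVar_mem_filtrationShift a
  | inv_of a _ =>
    intro j f hf
    have key : (magnusEnd α (FreeGroup.of a)⁻¹ - 1) f = -mulVar a ((oneAddVar a).symm f) := by
      have hsymm : (oneAddVar a).symm f + mulVar a ((oneAddVar a).symm f) = f :=
        (oneAddVar a).apply_symm_apply f
      have hinv : magnusEnd α (FreeGroup.of a)⁻¹ f = (oneAddVar a).symm f := by
        rw [magnusEnd, MonoidHom.comp_apply, map_inv, magnus, FreeGroup.lift_apply_of]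
        rfl
      rw [LinearMap.sub_apply, hinv, Module.End.one_apply, sub_eq_iff_eq_add, neg_add_eq_sub,
        eq_sub_iff_add_eq, hsymm]
    rw [key]
    exact neg_mem (mulVar_mem_filtrationShift a j _ (oneAddVar_symm_mem_degreeFiltration a hf))
  | mul g h hg hh =>
    rw [map_mul]
    exact mul_sub_one_mem_one (antitone_filtrationShift antitone_degreeFiltration) hg hh

end MagnusRepresentation

theorem eq_one_of_forall_of_sub_one_mem_augmentationIdeal_pow {α : Type*} (g : FreeGroup α)
    (hg : ∀ k, MonoidAlgebra.of ℚ _ g - 1 ∈ augmentationIdeal ℚ (FreeGroup α) ^ k) : g = 1 := by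
  classical
  have hshift (k : ℕ) : magnusEnd α g - 1 ∈ filtrationShift (degreeFiltration α) k := by
    simpa using lift_mem_of_mem_augmentationIdeal_pow (antitone_filtrationShift
      antitone_degreeFiltration) magnusEnd_sub_one_mem_filtrationShift (hg k)
  have hone : magnusEnd α g - 1 = 0 := LinearMap.ext fun f =>
    eq_zero_of_forall_mem_degreeFiltration fun k => by
      simpa using hshift k 0 f fun l hl => absurd hl (Nat.not_lt_zero _)
  refine magnus_injective (LinearEquiv.toLinearMap_injective ?_)
  exact (sub_eq_zero.1 hone).trans (by rw [map_one]; rfl)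

section EraseGen

variable {α : Type*} [DecidableEq α]

/-- The endomorphism of the free group deleting the letter `k` from every word. -/
def eraseGen (k : α) : FreeGroup α →* FreeGroup α :=
  FreeGroup.lift fun i => if i = k then 1 else FreeGroup.of i

@[simp]
theorem eraseGen_of_self (k : α) : eraseGen k (FreeGroup.of k) = 1 := by
  simp [eraseGen]

theorem eraseGen_of_of_ne {k i : α} (h : i ≠ k) :
    eraseGen k (FreeGroup.of i) = FreeGroup.of i := by
  simp [eraseGen, h]

/-- The map of the free group into the wreath product of `ℤ` by the free group which sends the
letter `k` to the generator of `ℤ` at the identity position and the other letters to the acting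
group. The position of its support tells the image of a conjugate of `k` from that of `k`. -/
def eraseGenWreath (k : α) : FreeGroup α →* Multiplicative ℤ ≀ᵣ FreeGroup α :=
  FreeGroup.lift fun i => if i = k then ⟨Pi.mulSingle 1 (Multiplicative.ofAdd 1), 1⟩
    else RegularWreathProduct.inl (FreeGroup.of i)

theorem right_eraseGenWreath (k : α) (g : FreeGroup α) :
    (eraseGenWreath k g).right = eraseGen k g := by
  have h : RegularWreathProduct.rightHom.comp (eraseGenWreath k) = eraseGen k := by
    ext i
    by_cases hi : i = k <;> simp [eraseGenWreath, eraseGen, hi]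
  exact DFunLike.congr_fun h g

theorem eraseGen_eq_one_of_commute {k : α} {g : FreeGroup α} (h : Commute g (FreeGroup.of k)) :
    eraseGen k g = 1 := by
  by_contra hne
  rw [← right_eraseGenWreath] at hne
  have hof : eraseGenWreath k (FreeGroup.of k) =
      ⟨Pi.mulSingle 1 (Multiplicative.ofAdd 1), 1⟩ := by
    simp [eraseGenWreath]
  have hleft := congrFun (congrArg RegularWreathProduct.left (h.map (eraseGenWreath k)).eq) 1
  simp [hof, Pi.mulSingle_eq_of_ne (inv_ne_one.2 hne)] at hleft

end EraseGen

section ArtinAut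

open FreeGroup

theorem freeGroup_mulAut_ext {α : Type*} {f g : MulAut (FreeGroup α)}
    (h : ∀ a, f (of a) = g (of a)) : f = g :=
  MulEquiv.toMonoidHom_injective (FreeGroup.ext_hom _ _ h)

/-- The Artin automorphism of the free group on `x₀, x₁, …` attached to the `j`-th braid generator:
`x_j ↦ x_j x_{j+1} x_j⁻¹` and `x_{j+1} ↦ x_j`. -/
def artinAut (j : ℕ) : MulAut (FreeGroup ℕ) :=
  MonoidHom.toMulEquiv
    (FreeGroup.lift fun i =>
      if i = j then of j * of (j + 1) * (of j)⁻¹ else of (Equiv.swap j (j + 1) i))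
    (FreeGroup.lift fun i =>
      if i = j + 1 then (of (j + 1))⁻¹ * of j * of (j + 1) else of (Equiv.swap j (j + 1) i))
    (by
      ext i
      by_cases h0 : i = j
      · simp [h0, mul_assoc]
      by_cases h1 : i = j + 1
      · simp [h1]
      simp [Equiv.swap_apply_of_ne_of_ne, h0, h1])
    (by
      ext i
      by_cases h0 : i = j
      · simp [h0]
      by_cases h1 : i = j + 1
      · simp [h1, mul_assoc]
      simp [Equiv.swap_apply_of_ne_of_ne, h0, h1])

theorem artinAut_of (j i : ℕ) : artinAut j (of i) =
    if i = j then of j * of (j + 1) * (of j)⁻¹ else of (Equiv.swap j (j + 1) i) := by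
  simp [artinAut]

@[simp]
theorem artinAut_of_self (j : ℕ) : artinAut j (of j) = of j * of (j + 1) * (of j)⁻¹ := by
  simp [artinAut_of]

@[simp]
theorem artinAut_of_succ (j : ℕ) : artinAut j (of (j + 1)) = of j := by
  simp [artinAut_of]

theorem artinAut_of_of_ne {i j : ℕ} (h : i ≠ j) (h' : i ≠ j + 1) :
    artinAut j (of i) = of i := by
  rw [artinAut_of, if_neg h, Equiv.swap_apply_of_ne_of_ne h h']

/-- The sequence `s` satisfies the braid relations among its first `N` terms. -/
structure IsBraidSeq {G : Type*} [Group G] (s : ℕ → G) (N : ℕ) : Prop where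
  commute : ∀ i j, i + 2 ≤ j → j < N → Commute (s i) (s j)
  braid : ∀ i, i + 1 < N → s i * s (i + 1) * s i = s (i + 1) * s i * s (i + 1)

theorem isBraidSeq_artinAut (N : ℕ) : IsBraidSeq artinAut N where
  commute i j hij _ := freeGroup_mulAut_ext fun k => by
    have hk : k = i ∨ k = i + 1 ∨ k = j ∨ k = j + 1 ∨
        (k ≠ i ∧ k ≠ i + 1 ∧ k ≠ j ∧ k ≠ j + 1) := by lia
    rcases hk with rfl | rfl | rfl | rfl | ⟨h1, h2, h3, h4⟩ <;>
      simp (disch := lia) [artinAut_of_of_ne]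
  braid i _ := freeGroup_mulAut_ext fun k => by
    have hk : k = i ∨ k = i + 1 ∨ k = i + 2 ∨ (k ≠ i ∧ k ≠ i + 1 ∧ k ≠ i + 2) := by lia
    have hsucc : artinAut (i + 1) (of (i + 2)) = of (i + 1) := artinAut_of_succ (i + 1)
    rcases hk with rfl | rfl | rfl | ⟨h1, h2, h3⟩ <;>
      simp (disch := lia) [artinAut_of_of_ne, hsucc, mul_assoc]

end ArtinAut

section Combing

open FreeGroup (of)

variable {G : Type*} [Group G]

theorem conj_mul_of_braid {s t : G} (h : s * t * s = t * s * t) :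
    MulAut.conj (s * t) s = t := by
  rw [MulAut.conj_apply, h, mul_assoc t, mul_inv_cancel_right]

theorem commute_conj_sq_inv_mul_sq_inv_of_braid {s t : G} (h : s * t * s = t * s * t) :
    Commute s (MulAut.conj s (t ^ 2)⁻¹ * (t ^ 2)⁻¹) := by
  have hs : (s * t * s) * s = t * (s * t * s) := by simp only [h, mul_assoc]
  have ht : (s * t * s) * t = s * (s * t * s) := by rw [mul_assoc, mul_assoc, ← mul_assoc t, ← h]
  have hdelta : Commute s ((s * t * s) ^ 2) :=
    calc s * (s * t * s) ^ 2 = s * (s * t * s) * (s * t * s) := by rw [sq, ← mul_assoc]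
      _ = s * t * s * (t * (s * t * s)) := by rw [← ht, mul_assoc]
      _ = (s * t * s) ^ 2 * s := by rw [← hs, sq]; simp only [mul_assoc]
  have hsq : (s * t * s) ^ 2 = t ^ 2 * s * t ^ 2 * s :=
    calc (s * t * s) ^ 2 = s * t * s * s * (t * s) := by simp only [sq, mul_assoc]
      _ = t * (t * s * t) * (t * s) := by rw [hs, h]
      _ = t ^ 2 * s * t ^ 2 * s := by simp only [sq, mul_assoc]
  have key : MulAut.conj s (t ^ 2)⁻¹ * (t ^ 2)⁻¹ = s ^ 2 * ((s * t * s) ^ 2)⁻¹ := by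
    rw [hsq, MulAut.conj_apply]
    group
  rw [key]
  exact ((Commute.refl s).pow_right 2).mul_right hdelta.inv_right

/-- The inverse of the pure braid generator `A_{i,K+1}`, in which the strand `i` is carried around
the strand `K + 1`: `σ_i ⋯ σ_{K-1} σ_K⁻² σ_{K-1}⁻¹ ⋯ σ_i⁻¹`. With this choice of sign the braids
act on the words in these generators by Artin's automorphisms. -/
def pureGen (s : ℕ → G) (K i : ℕ) : G :=
  if i < K then MulAut.conj (s i) (pureGen s K (i + 1)) else (s K ^ 2)⁻¹
termination_by K - i

/-- The braid `σ_K ⋯ σ_i`, a coset representative carrying the last strand to position `i`. -/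
def cosetRep (s : ℕ → G) (K i : ℕ) : G :=
  if i ≤ K then cosetRep s K (i + 1) * s i else 1
termination_by K + 1 - i

theorem pureGen_of_lt (s : ℕ → G) {K i : ℕ} (h : i < K) :
    pureGen s K i = MulAut.conj (s i) (pureGen s K (i + 1)) := by
  rw [pureGen, if_pos h]

theorem pureGen_self (s : ℕ → G) (K : ℕ) : pureGen s K K = (s K ^ 2)⁻¹ := by
  rw [pureGen, if_neg (lt_irrefl K)]

theorem cosetRep_of_le (s : ℕ → G) {K i : ℕ} (h : i ≤ K) :
    cosetRep s K i = cosetRep s K (i + 1) * s i := by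
  rw [cosetRep, if_pos h]

theorem cosetRep_succ_self (s : ℕ → G) (K : ℕ) : cosetRep s K (K + 1) = 1 := by
  rw [cosetRep, if_neg K.lt_succ_self.not_ge]

/-- The homomorphism from the free group which sends the `i`-th generator to `pureGen s K i`. -/
def pureHom (s : ℕ → G) (K : ℕ) : FreeGroup ℕ →* G :=
  FreeGroup.lift fun i => if i ≤ K then pureGen s K i else 1

theorem pureHom_of (s : ℕ → G) {K i : ℕ} (h : i ≤ K) : pureHom s K (of i) = pureGen s K i := by
  simp [pureHom, h]

theorem pureHom_of_of_lt (s : ℕ → G) {K i : ℕ} (h : K < i) : pureHom s K (of i) = 1 := by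
  simp [pureHom, h.not_ge]

theorem pureHom_eraseGen (s : ℕ → G) (K : ℕ) (x : FreeGroup ℕ) :
    pureHom s K (eraseGen (K + 1) x) = pureHom s K x := by
  have h : (pureHom s K).comp (eraseGen (K + 1)) = pureHom s K := by
    ext i
    by_cases hi : i = K + 1
    · simp [hi, pureHom]
    · simp [eraseGen_of_of_ne hi]
  exact DFunLike.congr_fun h x

/-- The subgroup generated by the first `K` terms of `s`. -/
def initialClosure (s : ℕ → G) (K : ℕ) : Subgroup G :=
  Subgroup.closure (s '' Set.Iio K)

theorem mem_initialClosure (s : ℕ → G) {K j : ℕ} (hj : j < K) : s j ∈ initialClosure s K :=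
  Subgroup.subset_closure (Set.mem_image_of_mem s hj)

namespace IsBraidSeq

variable {s : ℕ → G} {K i j : ℕ}

theorem mono {M N : ℕ} (hs : IsBraidSeq s N) (hMN : M ≤ N) : IsBraidSeq s M where
  commute i j hij hj := hs.commute i j hij (hj.trans_le hMN)
  braid i hi := hs.braid i (hi.trans_le hMN)

theorem conj_gen_succ (hs : IsBraidSeq s (K + 1)) (hi : i < K) :
    MulAut.conj (s (i + 1) * s i) (s (i + 1)) = s i :=
  conj_mul_of_braid (hs.braid i (by lia)).symm

theorem conj_gen (hs : IsBraidSeq s (K + 1)) (hi : i < K) :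
    MulAut.conj (s i * s (i + 1)) (s i) = s (i + 1) :=
  conj_mul_of_braid (hs.braid i (by lia))

theorem commute_pureGen_of_add_two_le (hs : IsBraidSeq s (K + 1)) (hi : i ≤ K) (hji : j + 2 ≤ i) :
    Commute (s j) (pureGen s K i) := by
  induction hi using Nat.decreasingInduction with
  | self =>
    rw [pureGen_self]
    exact ((hs.commute j K hji K.lt_succ_self).pow_right 2).inv_right
  | of_succ i hi ih =>
    have hsi := hs.commute j i hji (by lia)
    rw [pureGen_of_lt s hi]
    exact (hsi.mul_right (ih (by lia))).mul_right hsi.inv_right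

theorem commute_pureGen_of_lt (hs : IsBraidSeq s (K + 1)) (hj : j < K) (hij : i < j) :
    Commute (s j) (pureGen s K i) := by
  obtain ⟨j, rfl⟩ := Nat.exists_eq_add_one_of_ne_zero (Nat.ne_zero_of_lt hij)
  induction Nat.le_of_lt_succ hij using Nat.decreasingInduction with
  | self =>
    have := (hs.commute_pureGen_of_add_two_le hj le_rfl).map (MulAut.conj (s j * s (j + 1)))
    rwa [hs.conj_gen (by lia), map_mul, MulAut.mul_apply, ← pureGen_of_lt s hj,
      ← pureGen_of_lt s (by lia)] at this
  | of_succ i hi ih =>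
    have hsi := (hs.commute i (j + 1) (by lia) (by lia)).symm
    rw [pureGen_of_lt s (by lia)]
    exact (hsi.mul_right (ih (by lia))).mul_right hsi.inv_right

theorem commute_pureGen_mul_pureGen_succ (hs : IsBraidSeq s (K + 1)) (hj : j < K) :
    Commute (s j) (pureGen s K j * pureGen s K (j + 1)) := by
  obtain ⟨K, rfl⟩ := Nat.exists_eq_add_one_of_ne_zero (Nat.ne_zero_of_lt hj)
  induction Nat.le_of_lt_succ hj using Nat.decreasingInduction with
  | self =>
    rw [pureGen_of_lt s hj, pureGen_self]
    exact commute_conj_sq_inv_mul_sq_inv_of_braid (hs.braid K (by lia))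
  | of_succ j hjK ih =>
    have hcomm := hs.commute_pureGen_of_add_two_le (j := j) (i := j + 2) (by lia) le_rfl
    have hconj : MulAut.conj (s (j + 1) * s j) (pureGen s (K + 1) (j + 2)) =
        pureGen s (K + 1) (j + 1) := by
      rw [map_mul, MulAut.mul_apply, MulAut.conj_apply (s j), hcomm.eq, mul_inv_cancel_right,
        ← pureGen_of_lt s (by lia)]
    have := (ih (by lia)).map (MulAut.conj (s (j + 1) * s j))
    rwa [hs.conj_gen_succ hj, map_mul (MulAut.conj _), hconj, pureGen_of_lt s (i := j + 1) (by lia),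
      MulAut.conj_apply (s (j + 1)), map_mul (MulAut.conj _), map_mul (MulAut.conj _), hconj,
      map_inv, hs.conj_gen_succ hj, ← MulAut.conj_apply (s j), ← pureGen_of_lt s hj,
      ← MulAut.conj_apply (s (j + 1)), ← pureGen_of_lt s (by lia)] at this

theorem conj_pureGen_self (hs : IsBraidSeq s (K + 1)) (hj : j < K) :
    MulAut.conj (s j) (pureGen s K j) =
      pureGen s K j * pureGen s K (j + 1) * (pureGen s K j)⁻¹ := by
  have hcomm := (hs.commute_pureGen_mul_pureGen_succ hj).eq
  rw [eq_mul_inv_iff_mul_eq, ← mul_inv_eq_iff_eq_mul.2 hcomm, ← MulAut.conj_apply, map_mul,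
    ← pureGen_of_lt s hj]

theorem conj_pureHom (hs : IsBraidSeq s (K + 1)) (hj : j < K) (x : FreeGroup ℕ) :
    MulAut.conj (s j) (pureHom s K x) = pureHom s K (artinAut j x) := by
  have h : (MulAut.conj (s j)).toMonoidHom.comp (pureHom s K) =
      (pureHom s K).comp (artinAut j).toMonoidHom := by
    ext i
    have hi : i = j ∨ i = j + 1 ∨ (i ≠ j ∧ i ≠ j + 1 ∧ i ≤ K) ∨ K < i := by lia
    rcases hi with rfl | rfl | ⟨h0, h1, hiK⟩ | hKi
    · simp (disch := lia) [pureHom_of, hs.conj_pureGen_self hj]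
    · simp (disch := lia) [pureHom_of, pureGen_of_lt s hj]
    · have hcomm : Commute (s j) (pureGen s K i) := by
        rcases lt_or_gt_of_ne h0 with hij | hji
        · exact hs.commute_pureGen_of_lt hj hij
        · exact hs.commute_pureGen_of_add_two_le hiK (by lia)
      simp [pureHom_of s hiK, artinAut_of_of_ne h0 h1, hcomm.eq]
    · simp (disch := lia) [artinAut_of_of_ne, pureHom_of_of_lt s hKi]
  exact DFunLike.congr_fun h x

theorem initialClosure_le_normalizer (hs : IsBraidSeq s (K + 1)) :
    initialClosure s K ≤ Subgroup.normalizer (pureHom s K).range := by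
  rw [initialClosure, Subgroup.closure_le]
  rintro _ ⟨j, hj, rfl⟩
  refine Subgroup.mem_normalizer_iff.2 fun u => ⟨?_, ?_⟩
  · rintro ⟨x, rfl⟩
    exact ⟨artinAut j x, (hs.conj_pureHom hj x).symm⟩
  · rintro ⟨y, hy⟩
    obtain ⟨x, rfl⟩ := (artinAut j).surjective y
    rw [← hs.conj_pureHom hj] at hy
    exact ⟨x, (MulAut.conj (s j)).injective hy⟩

theorem commute_cosetRep (hs : IsBraidSeq s (K + 1)) (hi : i ≤ K + 1) (hji : j + 2 ≤ i) :
    Commute (s j) (cosetRep s K i) := by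
  induction hi using Nat.decreasingInduction with
  | self =>
    rw [cosetRep_succ_self]
    exact Commute.one_right _
  | of_succ i hi ih =>
    rw [cosetRep_of_le s (by lia)]
    exact (ih (by lia)).mul_right (hs.commute j i hji hi)

theorem cosetRep_mul_succ (hs : IsBraidSeq s (K + 1)) (hj : j < K) (hij : i ≤ j) :
    cosetRep s K i * s (j + 1) = s j * cosetRep s K i := by
  induction hij using Nat.decreasingInduction with
  | self =>
    have hcomm : Commute (s j) (cosetRep s K (j + 2)) := hs.commute_cosetRep (by lia) le_rfl
    rw [cosetRep_of_le s hj.le, cosetRep_of_le s hj, mul_assoc, mul_assoc, ← mul_assoc (s (j + 1)),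
      ← hs.braid j (by lia), ← mul_assoc, ← mul_assoc, ← hcomm.eq]
    simp only [mul_assoc]
  | of_succ i hi ih =>
    rw [cosetRep_of_le s (by lia), mul_assoc, (hs.commute i (j + 1) (by lia) (by lia)).eq,
      ← mul_assoc, ih, mul_assoc]

theorem conj_cosetRep_sq_mem_range_pureHom (hs : IsBraidSeq s (K + 1)) (hi : i ≤ K) :
    MulAut.conj (cosetRep s K (i + 1)) (s i ^ 2) ∈ (pureHom s K).range := by
  induction hi using Nat.decreasingInduction with
  | self =>
    rw [cosetRep_succ_self, map_one, MulAut.one_apply]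
    exact ⟨(of K)⁻¹, by rw [map_inv, pureHom_of s le_rfl, pureGen_self, inv_inv]⟩
  | of_succ i hi ih =>
    have hcomm : Commute (s i) (cosetRep s K (i + 2)) := hs.commute_cosetRep (by lia) le_rfl
    have hnorm := hs.initialClosure_le_normalizer (mem_initialClosure s hi)
    have hconj : MulAut.conj (s i) (MulAut.conj (cosetRep s K (i + 1)) (s i ^ 2)) =
        MulAut.conj (cosetRep s K (i + 2)) (s (i + 1) ^ 2) := by
      rw [cosetRep_of_le s hi, ← MulAut.mul_apply, ← map_mul, ← mul_assoc, hcomm.eq, mul_assoc,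
        map_mul, MulAut.mul_apply, map_pow, hs.conj_gen hi]
    rwa [Subgroup.mem_normalizer_iff.1 hnorm, ← MulAut.conj_apply, hconj]

theorem cosetRep_mul_mul_cosetRep_swap_inv_mem (hs : IsBraidSeq s (K + 1)) (hi : i ≤ K + 1)
    (hj : j ≤ K) : cosetRep s K i * s j * (cosetRep s K (Equiv.swap j (j + 1) i))⁻¹ ∈
      (pureHom s K).range ⊔ initialClosure s K := by
  have hcases : i < j ∨ i = j ∨ i = j + 1 ∨ j + 2 ≤ i := by lia
  rcases hcases with hij | rfl | rfl | hji
  · obtain ⟨j, rfl⟩ := Nat.exists_eq_add_one_of_ne_zero (Nat.ne_zero_of_lt hij)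
    rw [Equiv.swap_apply_of_ne_of_ne (by lia) (by lia), hs.cosetRep_mul_succ hj (by lia),
      mul_inv_cancel_right]
    exact Subgroup.mem_sup_right (mem_initialClosure s hj)
  · rw [Equiv.swap_apply_left, cosetRep_of_le s hj, mul_assoc (cosetRep _ _ _), ← sq]
    exact Subgroup.mem_sup_left (hs.conj_cosetRep_sq_mem_range_pureHom hj)
  · rw [Equiv.swap_apply_right, ← cosetRep_of_le s hj, mul_inv_cancel]
    exact one_mem _
  · rw [Equiv.swap_apply_of_ne_of_ne (by lia) (by lia), ← (hs.commute_cosetRep hi hji).eq,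
      mul_inv_cancel_right]
    exact Subgroup.mem_sup_right (mem_initialClosure s (by lia))

theorem exists_mul_cosetRep_inv_mem (hs : IsBraidSeq s (K + 1)) {g : G}
    (hg : g ∈ initialClosure s (K + 1)) : ∃ i ≤ K + 1,
      g * (cosetRep s K i)⁻¹ ∈ (pureHom s K).range ⊔ initialClosure s K := by
  have hswap {i j : ℕ} (hi : i ≤ K + 1) (hj : j ≤ K) : Equiv.swap j (j + 1) i ≤ K + 1 := by
    rw [Equiv.swap_apply_def]
    split_ifs <;> lia
  induction hg using Subgroup.closure_induction_right with
  | one => exact ⟨K + 1, le_rfl, by simp [cosetRep_succ_self]⟩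
  | mul_right g _ _ hj ih =>
    obtain ⟨i, hi, hg⟩ := ih
    obtain ⟨j, hj, rfl⟩ := hj
    replace hj := Nat.le_of_lt_succ hj
    refine ⟨Equiv.swap j (j + 1) i, hswap hi hj, ?_⟩
    simpa [mul_assoc] using mul_mem hg (hs.cosetRep_mul_mul_cosetRep_swap_inv_mem hi hj)
  | mul_inv_cancel g _ _ hj ih =>
    obtain ⟨i, hi, hg⟩ := ih
    obtain ⟨j, hj, rfl⟩ := hj
    replace hj := Nat.le_of_lt_succ hj
    refine ⟨Equiv.swap j (j + 1) i, hswap hi hj, ?_⟩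
    have hmem := hs.cosetRep_mul_mul_cosetRep_swap_inv_mem (hswap hi hj) hj
    rw [Equiv.swap_apply_self] at hmem
    simpa [mul_assoc] using mul_mem hg (inv_mem hmem)

theorem exists_eq_mul_mul_cosetRep (hs : IsBraidSeq s (K + 1)) {g : G}
    (hg : g ∈ initialClosure s (K + 1)) : ∃ i ≤ K + 1, ∃ u ∈ (pureHom s K).range,
      ∃ h ∈ initialClosure s K, g = u * h * cosetRep s K i := by
  obtain ⟨i, hi, hmem⟩ := hs.exists_mul_cosetRep_inv_mem hg
  rw [← SetLike.mem_coe, Subgroup.coe_mul_of_right_le_normalizer_left _ _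
    hs.initialClosure_le_normalizer] at hmem
  obtain ⟨u, hu, h, hh, huh⟩ := hmem
  exact ⟨i, hi, u, hu, h, hh, eq_mul_of_mul_inv_eq huh.symm⟩

end IsBraidSeq

end Combing

section Faithful

open FreeGroup (of)

theorem eraseGen_artinAut {j k : ℕ} (hj : j + 1 < k) (x : FreeGroup ℕ) :
    eraseGen k (artinAut j x) = artinAut j (eraseGen k x) := by
  have h : (eraseGen k).comp (artinAut j).toMonoidHom =
      (artinAut j).toMonoidHom.comp (eraseGen k) := by
    ext i
    have hi : i = j ∨ i = j + 1 ∨ i = k ∨ (i ≠ j ∧ i ≠ j + 1 ∧ i ≠ k) := by lia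
    rcases hi with rfl | rfl | rfl | ⟨h0, h1, hk⟩ <;>
      simp (disch := lia) [artinAut_of_of_ne, eraseGen_of_of_ne]
  exact DFunLike.congr_fun h x

theorem eraseGen_artinAut_sq (j : ℕ) (x : FreeGroup ℕ) :
    eraseGen (j + 1) ((artinAut j ^ 2) x) = eraseGen (j + 1) x := by
  have h : (eraseGen (j + 1)).comp (artinAut j ^ 2).toMonoidHom = eraseGen (j + 1) := by
    ext i
    have hi : i = j ∨ i = j + 1 ∨ (i ≠ j ∧ i ≠ j + 1) := by lia
    rcases hi with rfl | rfl | ⟨h0, h1⟩ <;>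
      simp (disch := lia) [sq, artinAut_of_of_ne, eraseGen_of_of_ne]
  exact DFunLike.congr_fun h x

variable {G : Type*} [Group G] {s : ℕ → G} {K : ℕ} {φ : G →* MulAut (FreeGroup ℕ)}

theorem map_of_eq_of_mem_initialClosure (hφ : ∀ j < K, φ (s j) = artinAut j) {h : G}
    (hh : h ∈ initialClosure s K) : φ h (of (K + 1)) = of (K + 1) := by
  suffices hle : initialClosure s K ≤ (MulAction.stabilizer _ (of (K + 1))).comap φ from hle hh
  rw [initialClosure, Subgroup.closure_le]
  rintro _ ⟨j, hj : j < K, rfl⟩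
  simp (disch := lia) [hφ j hj, artinAut_of_of_ne]

theorem eraseGen_map_of_mem_initialClosure (hφ : ∀ j < K, φ (s j) = artinAut j) {h : G}
    (hh : h ∈ initialClosure s K) (x : FreeGroup ℕ) :
    eraseGen (K + 1) (φ h x) = φ h (eraseGen (K + 1) x) := by
  induction hh using Subgroup.closure_induction generalizing x with
  | mem _ hj =>
    obtain ⟨j, hj, rfl⟩ := hj
    rw [hφ j hj, eraseGen_artinAut (Nat.succ_lt_succ hj)]
  | one => simp
  | mul g h _ _ ihg ihh => simp [ihg, ihh]
  | inv g _ ih =>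
    obtain ⟨y, rfl⟩ := (φ g).surjective x
    rw [ih, map_inv, MulAut.inv_apply_self, MulAut.inv_apply_self]

theorem map_cosetRep_of (hφ : ∀ j < K + 1, φ (s j) = artinAut j) {i : ℕ} (hi : i ≤ K) :
    φ (cosetRep s K i) (of (K + 1)) = of K := by
  induction hi using Nat.decreasingInduction with
  | self => simp [cosetRep_of_le s le_rfl, cosetRep_succ_self, hφ K K.lt_succ_self]
  | of_succ i hi ih =>
    rw [cosetRep_of_le s hi.le, map_mul, MulAut.mul_apply, hφ i (by lia),
      artinAut_of_of_ne (by lia) (by lia), ih]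

variable (s K φ) in
/-- The elements `u` acting on the free group as the point-pushing map of a loop of the last
puncture: they are invisible after that puncture is filled in, and the word `y` conjugating its
generator recovers `u`. -/
def pushSubgroup : Subgroup G where
  carrier := {u | (∀ x, eraseGen (K + 1) (φ u x) = eraseGen (K + 1) x) ∧
    ∃ y, φ u (of (K + 1)) = MulAut.conj y (of (K + 1)) ∧ pureHom s K y = u⁻¹}
  one_mem' := ⟨by simp, 1, by simp⟩
  mul_mem' := by
    rintro u v ⟨hu, y, hy, hyu⟩ ⟨hv, z, hz, hzv⟩
    refine ⟨fun x => by simp [hu, hv], φ u z * y, by simp [hz, hy, mul_assoc], ?_⟩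
    rw [map_mul, ← pureHom_eraseGen, hu, pureHom_eraseGen, hyu, hzv, mul_inv_rev]
  inv_mem' := by
    rintro u ⟨hu, y, hy, hyu⟩
    have hinv (x : FreeGroup ℕ) : φ u (φ u⁻¹ x) = x := by
      rw [map_inv, MulAut.apply_inv_self]
    have hu' (x : FreeGroup ℕ) : eraseGen (K + 1) (φ u⁻¹ x) = eraseGen (K + 1) x := by
      rw [← hu, hinv]
    refine ⟨hu', φ u⁻¹ y⁻¹, (φ u).injective ?_, ?_⟩
    · simp only [hinv, MulAut.conj_apply, map_mul, map_inv (φ u), hy]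
      group
    · rw [← pureHom_eraseGen, hu', pureHom_eraseGen, map_inv, hyu]

theorem pureGen_mem_pushSubgroup (hs : IsBraidSeq s (K + 1))
    (hφ : ∀ j < K + 1, φ (s j) = artinAut j) {i : ℕ} (hi : i ≤ K) :
    pureGen s K i ∈ pushSubgroup s K φ := by
  induction hi using Nat.decreasingInduction with
  | self =>
    rw [pureGen_self, inv_mem_iff]
    have hsq : φ (s K ^ 2) = artinAut K ^ 2 := by rw [map_pow, hφ K K.lt_succ_self]
    refine ⟨fun x => by rw [hsq, eraseGen_artinAut_sq], of K, by rw [hsq]; simp [sq], ?_⟩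
    rw [pureHom_of s le_rfl, pureGen_self]
  | of_succ i hi ih =>
    have hsi := hφ i (by lia)
    have hfix : (artinAut i)⁻¹ (of (K + 1)) = of (K + 1) := by
      rw [MulAut.inv_apply, MulEquiv.symm_apply_eq, artinAut_of_of_ne (by lia) (by lia)]
    obtain ⟨hu, y, hy, hyu⟩ := ih
    rw [pureGen_of_lt s hi]
    refine ⟨fun x => ?_, artinAut i y, ?_, ?_⟩
    · rw [MulAut.conj_apply, map_mul, map_mul, map_inv, MulAut.mul_apply, MulAut.mul_apply, hsi,
        eraseGen_artinAut (by lia), hu, ← eraseGen_artinAut (by lia), MulAut.apply_inv_self]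
    · simp (disch := lia) [hsi, hfix, hy, artinAut_of_of_ne]
    · rw [← hs.conj_pureHom hi, hyu, map_inv]

theorem range_pureHom_le_pushSubgroup (hs : IsBraidSeq s (K + 1))
    (hφ : ∀ j < K + 1, φ (s j) = artinAut j) : (pureHom s K).range ≤ pushSubgroup s K φ := by
  refine FreeGroup.range_lift_le ?_
  rintro _ ⟨i, rfl⟩
  dsimp only
  split_ifs with hi
  · exact pureGen_mem_pushSubgroup hs hφ hi
  · exact one_mem _

theorem eq_one_of_mem_initialClosure_of_map_eq_one {N : ℕ} (hs : IsBraidSeq s N)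
    (hφ : ∀ j < N, φ (s j) = artinAut j) {g : G} (hg : g ∈ initialClosure s N)
    (hg1 : φ g = 1) : g = 1 := by
  induction N generalizing g with
  | zero => simpa [initialClosure] using hg
  | succ K ih =>
    have hφK : ∀ j < K, φ (s j) = artinAut j := fun j hj => hφ j (hj.trans K.lt_succ_self)
    obtain ⟨i, hi, u, hu, h, hh, rfl⟩ := hs.exists_eq_mul_mul_cosetRep hg
    obtain ⟨herase, y, hy, hyu⟩ := range_pureHom_le_pushSubgroup hs hφ hu
    have herase_uh (x : FreeGroup ℕ) :
        eraseGen (K + 1) (φ (u * h) x) = φ h (eraseGen (K + 1) x) := by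
      rw [map_mul, MulAut.mul_apply, herase, eraseGen_map_of_mem_initialClosure hφK hh]
    obtain hiK | rfl := Nat.le_or_eq_of_le_succ hi
    · have hK : φ h (of K) = 1 := by
        rw [← eraseGen_of_of_ne K.lt_succ_self.ne, ← herase_uh, ← map_cosetRep_of hφ hiK,
          ← MulAut.mul_apply, ← map_mul, hg1, MulAut.one_apply, eraseGen_of_self]
      exact absurd ((map_eq_one_iff _ (φ h).injective).1 hK) (FreeGroup.of_ne_one K)
    · rw [cosetRep_succ_self, mul_one] at hg1 ⊢
      have hh1 : h = 1 := by
        refine ih (hs.mono K.le_succ) hφK hh (freeGroup_mulAut_ext fun i => ?_)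
        by_cases hiK : i = K + 1
        · rw [hiK, map_of_eq_of_mem_initialClosure hφK hh, MulAut.one_apply]
        · rw [← eraseGen_of_of_ne hiK, ← herase_uh, hg1]
          simp [eraseGen_of_of_ne hiK]
      rw [hh1, mul_one] at hg1 ⊢
      have hcomm : Commute y (of (K + 1)) := by
        rw [hg1, MulAut.one_apply, MulAut.conj_apply, eq_mul_inv_iff_mul_eq] at hy
        exact hy.symm
      rw [← inv_eq_one, ← hyu, ← pureHom_eraseGen, eraseGen_eq_one_of_commute hcomm, map_one]

end Faithful

theorem mem_iaAut_of_isConj {α : Type*} {f : MulAut (FreeGroup α)}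
    (h : ∀ a, IsConj (f (FreeGroup.of a)) (FreeGroup.of a)) : f ∈ iaAut (FreeGroup α) := by
  have hcomp : Abelianization.of.comp f.toMonoidHom = Abelianization.of := by
    ext a
    exact isConj_iff_eq.1 (Abelianization.of.map_isConj (h a))
  exact DFunLike.congr_fun hcomp

theorem perm_pow_factorial_card_eq_one {α : Type*} (t : Finset α) {σ : Equiv.Perm α}
    (hσ : ∀ a ∉ t, σ a = a) : σ ^ t.card.factorial = 1 := by
  classical
  obtain ⟨τ, hτ⟩ := (Equiv.Perm.subtypeEquivSubtypePerm (· ∈ t)).surjective ⟨σ, hσ⟩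
  have hτσ : Equiv.Perm.ofSubtype τ = σ := congrArg Subtype.val hτ
  have hcard : t.card.factorial = Fintype.card (Equiv.Perm t) := by
    rw [Fintype.card_perm, Fintype.card_coe]
  rw [← hτσ, ← map_pow, hcard, pow_card_eq_one, map_one]

section BraidGroup

open FreeGroup (of)

theorem braidGen_succ {n i : ℕ} (h : i < n - 1) :
    braidGen n (i + 1) = PresentedGroup.of ⟨i, h⟩ := by
  rw [braidGen, dif_pos ⟨by lia, by lia⟩]
  rfl

theorem isBraidSeq_braidGen (n : ℕ) : IsBraidSeq (fun i => braidGen n (i + 1)) (n - 1) where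
  commute i j hij hj := by
    have hi : i < n - 1 := by lia
    simp only [braidGen_succ hi, braidGen_succ hj]
    exact PresentedGroup.mk_eq_mk_of_mul_inv_mem (Or.inl ⟨⟨i, hi⟩, ⟨j, hj⟩, Or.inl hij, rfl⟩)
  braid i hi := by
    have hi' : i < n - 1 := by lia
    simp only [braidGen_succ hi, braidGen_succ hi']
    exact PresentedGroup.mk_eq_mk_of_mul_inv_mem
      (Or.inr ⟨⟨i, hi'⟩, ⟨i + 1, hi⟩, Or.inl rfl, rfl⟩)

theorem initialClosure_braidGen (n : ℕ) :
    initialClosure (fun i => braidGen n (i + 1)) (n - 1) = ⊤ := by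
  rw [eq_top_iff, ← PresentedGroup.closure_range_of, Subgroup.closure_le]
  rintro _ ⟨i, rfl⟩
  rw [← braidGen_succ i.isLt]
  exact mem_initialClosure (fun i => braidGen n (i + 1)) i.isLt

theorem braidGroup_induction {n : ℕ} {p : BraidGroup n → Prop} (g : BraidGroup n)
    (gen : ∀ j < n - 1, p (braidGen n (j + 1))) (one : p 1)
    (mul : ∀ g h, p g → p h → p (g * h)) (inv : ∀ g, p g → p g⁻¹) : p g := by
  have hg : g ∈ initialClosure (fun i => braidGen n (i + 1)) (n - 1) :=
    initialClosure_braidGen n ▸ Subgroup.mem_top g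
  induction hg using Subgroup.closure_induction with
  | mem _ hj =>
    obtain ⟨j, hj, rfl⟩ := hj
    exact gen j hj
  | one => exact one
  | mul g h _ _ hg hh => exact mul g h hg hh
  | inv g _ hg => exact inv g hg

/-- The homomorphism out of the braid group determined by a sequence satisfying the braid
relations; `σ_{i+1}` is sent to `t i`. -/
def IsBraidSeq.lift {G : Type*} [Group G] {t : ℕ → G} {n : ℕ} (ht : IsBraidSeq t (n - 1)) :
    BraidGroup n →* G :=
  PresentedGroup.toGroup (rels := braidRels n) (f := fun i : Fin (n - 1) => t i) (by
    rintro _ (⟨i, j, hij | hji, rfl⟩ | ⟨i, j, hij | hji, rfl⟩) <;>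
      rw [map_mul, map_inv, mul_inv_eq_one]
    · simpa using (ht.commute i j hij j.isLt).eq
    · simpa using (ht.commute j i hji i.isLt).eq.symm
    · simpa [← hij] using ht.braid i (hij ▸ j.isLt)
    · simpa [← hji] using (ht.braid j (hji ▸ i.isLt)).symm)

theorem IsBraidSeq.lift_braidGen {G : Type*} [Group G] {t : ℕ → G} {n j : ℕ}
    (ht : IsBraidSeq t (n - 1)) (hj : j < n - 1) : ht.lift (braidGen n (j + 1)) = t j := by
  rw [braidGen_succ hj, IsBraidSeq.lift, PresentedGroup.toGroup.of]

/-- The Artin representation of the braid group on the free group; the generators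
`x_n, x_{n+1}, …` are fixed. -/
def artinRep (n : ℕ) : BraidGroup n →* MulAut (FreeGroup ℕ) :=
  (isBraidSeq_artinAut (n - 1)).lift

theorem artinRep_braidGen {n j : ℕ} (hj : j < n - 1) :
    artinRep n (braidGen n (j + 1)) = artinAut j :=
  IsBraidSeq.lift_braidGen _ hj

theorem artinRep_injective (n : ℕ) : Function.Injective (artinRep n) :=
  (injective_iff_map_eq_one _).2 fun _ => eq_one_of_mem_initialClosure_of_map_eq_one
    (isBraidSeq_braidGen n) (fun _ => artinRep_braidGen)
    (initialClosure_braidGen n ▸ Subgroup.mem_top _)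

theorem isBraidSeq_swap (N : ℕ) : IsBraidSeq (fun i => Equiv.swap i (i + 1)) N where
  commute i j hij _ := by
    refine Equiv.Perm.Disjoint.commute fun k => ?_
    by_cases hk : k = i ∨ k = i + 1
    · exact Or.inr (Equiv.swap_apply_of_ne_of_ne (by lia) (by lia))
    · exact Or.inl (Equiv.swap_apply_of_ne_of_ne (by lia) (by lia))
  braid i _ := by
    have hleft : Equiv.swap (i + 1) i * Equiv.swap (i + 2) (i + 1) * Equiv.swap (i + 1) i =
        Equiv.swap i (i + 2) := Equiv.swap_mul_swap_mul_swap (by lia) (by lia)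
    rw [Equiv.swap_comm (i + 1), Equiv.swap_comm (i + 2), Equiv.swap_comm i (i + 2)] at hleft
    exact hleft.trans (Equiv.swap_mul_swap_mul_swap (by lia) (by lia)).symm

/-- The permutation of the strands, numbered `0, …, n - 1`, underlying a braid. -/
def braidPerm (n : ℕ) : BraidGroup n →* Equiv.Perm ℕ :=
  (isBraidSeq_swap (n - 1)).lift

theorem braidPerm_braidGen {n j : ℕ} (hj : j < n - 1) :
    braidPerm n (braidGen n (j + 1)) = Equiv.swap j (j + 1) :=
  IsBraidSeq.lift_braidGen _ hj

theorem braidPerm_apply_of_le {n i : ℕ} (hi : n ≤ i) (g : BraidGroup n) :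
    braidPerm n g i = i := by
  induction g using braidGroup_induction with
  | gen j hj => rw [braidPerm_braidGen hj, Equiv.swap_apply_of_ne_of_ne (by lia) (by lia)]
  | one => simp
  | mul g h hg hh => rw [map_mul, Equiv.Perm.mul_apply, hh, hg]
  | inv g hg => rw [map_inv, Equiv.Perm.inv_eq_iff_eq, hg]

theorem isConj_artinRep_of (n : ℕ) (g : BraidGroup n) (i : ℕ) :
    IsConj (artinRep n g (of i)) (of (braidPerm n g i)) := by
  induction g using braidGroup_induction generalizing i with
  | gen j hj =>
    rw [artinRep_braidGen hj, braidPerm_braidGen hj, artinAut_of]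
    split_ifs with hij
    · rw [hij, Equiv.swap_apply_left]
      exact (isConj_iff.2 ⟨of j, rfl⟩).symm
    · exact IsConj.refl _
  | one =>
    rw [map_one, map_one]
    exact IsConj.refl _
  | mul g h hg hh =>
    rw [map_mul, map_mul, MulAut.mul_apply, Equiv.Perm.mul_apply]
    exact ((artinRep n g).toMonoidHom.map_isConj (hh i)).trans (hg _)
  | inv g hg =>
    have := (artinRep n g⁻¹).toMonoidHom.map_isConj (hg ((braidPerm n g)⁻¹ i))
    simpa using this.symm

/-- The pure braid group: the braids inducing the trivial permutation of the strands. -/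
def pureBraidGroup (n : ℕ) : Subgroup (BraidGroup n) :=
  (braidPerm n).ker

theorem artinRep_mem_iaAut {n : ℕ} {g : BraidGroup n} (hg : g ∈ pureBraidGroup n) :
    artinRep n g ∈ iaAut (FreeGroup ℕ) :=
  mem_iaAut_of_isConj fun i => by
    simpa [MonoidHom.mem_ker.1 hg] using isConj_artinRep_of n g i

instance (n : ℕ) : IsMulTorsionFree (pureBraidGroup n) := by
  have : IsMulTorsionFree (iaAut (FreeGroup ℕ)) :=
    isMulTorsionFree_iaAut eq_one_of_forall_of_sub_one_mem_augmentationIdeal_pow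
  let ρ : pureBraidGroup n →* iaAut (FreeGroup ℕ) :=
    ((artinRep n).comp (pureBraidGroup n).subtype).codRestrict _ fun g => artinRep_mem_iaAut g.2
  have hρ : Function.Injective ρ := fun g h hgh =>
    Subtype.ext (artinRep_injective n (congrArg Subtype.val hgh))
  exact hρ.isMulTorsionFree ρ

theorem pow_factorial_mem_pureBraidGroup {n : ℕ} (g : BraidGroup n) :
    g ^ n.factorial ∈ pureBraidGroup n := by
  have hfix : ∀ i ∉ Finset.range n, braidPerm n g i = i := fun i hi =>
    braidPerm_apply_of_le (not_lt.1 (mt Finset.mem_range.2 hi)) g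
  rw [pureBraidGroup, MonoidHom.mem_ker, map_pow]
  simpa using perm_pow_factorial_card_eq_one (Finset.range n) hfix

end BraidGroup

theorem commute_of_commute_zpow {G : Type*} [Group G] [IsMulTorsionFree G] {a b : G} {M : ℤ}
    (hM : M ≠ 0) (h : Commute (a ^ M) (b ^ M)) : Commute a b := by
  have of_zpow_left {x y : G} (hxy : Commute (x ^ M) y) : Commute x y := by
    have hconj : (MulAut.conj y x) ^ M = x ^ M := by
      rw [← map_zpow, MulAut.conj_apply, ← hxy.eq, mul_inv_cancel_right]
    exact (mul_inv_eq_iff_eq_mul.1 (zpow_left_injective hM hconj)).symm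
  exact (of_zpow_left (of_zpow_left h).symm).symm

/-- If `α^M` and `β^M` commute for some non-zero integer `M`, then
`α^(n!)` and `β^(n!)` commute. -/
theorem commute_factorial_pow {n : ℕ} (hn : 2 ≤ n) (α β : BraidGroup n)
    (M : ℤ) (hM : M ≠ 0) (h : Commute (α ^ M) (β ^ M)) :
    Commute (α ^ n.factorial) (β ^ n.factorial) := by
  let a : pureBraidGroup n := ⟨α ^ n.factorial, pow_factorial_mem_pureBraidGroup α⟩
  let b : pureBraidGroup n := ⟨β ^ n.factorial, pow_factorial_mem_pureBraidGroup β⟩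
  have hpow : Commute ((α ^ n.factorial) ^ M) ((β ^ n.factorial) ^ M) := by
    simpa only [← zpow_natCast, zpow_comm _ M] using h.pow_pow n.factorial n.factorial
  have hab : Commute (a ^ M) (b ^ M) := Subtype.ext hpow.eq
  exact (commute_of_commute_zpow hM hab).map (pureBraidGroup n).subtype
end

section
/- Let s = (β_1, β_2) ∈ B_3^2 be a degree 3, length 2 braid system whose Hurwitz orbit s·B_2 is finite. Then the Hurwitz orbit has at most 6 elements: #(s·B_2) ≤ 6. -/
/-!
The group acting on pairs is cyclic, generated by one Hurwitz move, and the square of that move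
conjugates both entries by the invariant product `c = β₁β₂`. Hence an orbit is finite exactly when
some positive power of `c` commutes with `β₁`, and it suffices to show that then already `c ^ 2` or
`c ^ 3` commutes with `β₁`.

Commutation in `B₃` can be tested in `SL(2, ℤ)`: the commutator subgroup of `B₃` lies in the
subgroup generated by `σ₁σ₂⁻¹` and `σ₂⁻¹σ₁`, whose images play ping-pong on the slopes in `P¹(ℚ)`,
so the representation is injective there. For `A ∈ SL(2, ℤ)` with `|tr A| ≥ 2`, `A` is a polynomial
in every positive power of `A` over `ℚ`; otherwise `A ^ 2 = -1` or `A ^ 3 = ±1`.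
-/

open Function Polynomial.Chebyshev
open scoped MatrixGroups Pointwise

section HurwitzAction

variable {G : Type*} [Group G]

theorem hurwitzOrbit_eq_orbit {n : ℕ} (s : Fin n → G) :
    hurwitzOrbit s =
      MulAction.orbit (Subgroup.closure (Set.range (hEquiv (G := G) (n := n)))) s := by
  have range_lift : (Subgroup.closure (Set.range (hEquiv (G := G) (n := n)))).op =
      (FreeGroup.lift fun i => MulOpposite.op (hEquiv (G := G) (n := n) i)).range := by
    rw [FreeGroup.range_lift_eq_closure, Subgroup.op_closure]
    congr 1
    ext g
    simp [← MulOpposite.unop_inj]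
  ext t
  constructor
  · rintro ⟨w, rfl⟩
    exact ⟨⟨_, Subgroup.mem_op.mp (range_lift.ge ⟨w, rfl⟩)⟩, rfl⟩
  · rintro ⟨⟨g, hg⟩, rfl⟩
    obtain ⟨w, hw⟩ := range_lift.le (show MulOpposite.op g ∈ _ from hg)
    exact ⟨w, by rw [hurwitzAct, hw]; rfl⟩

/-- Both sides are `0` when the orbit is infinite. -/
theorem ncard_hurwitzOrbit_pair (s : Fin 2 → G) :
    (hurwitzOrbit s).ncard = minimalPeriod (hEquiv (0 : Fin 1)) s := by
  have closure_eq_zpowers : Subgroup.closure (Set.range (hEquiv (G := G) (n := 2))) =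
      Subgroup.zpowers (hEquiv (0 : Fin 1)) := by
    rw [Subgroup.zpowers_eq_closure]
    exact congrArg _ (Set.range_unique (ι := Fin 1))
  rw [hurwitzOrbit_eq_orbit, closure_eq_zpowers, ← Nat.card_coe_set_eq,
    Nat.card_congr (MulAction.orbitZPowersEquiv _ s), Nat.card_zmod]
  rfl

theorem hEquiv_monoidHom_comp {n : ℕ} {G' : Type*} [Group G'] (f : G →* G') (i : Fin (n - 1))
    (s : Fin n → G) : hEquiv i (f ∘ s) = f ∘ hEquiv i s := by
  funext k
  simp only [hEquiv, Equiv.coe_fn_mk, comp_apply]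
  split_ifs <;> simp only [map_mul, map_inv]

theorem hEquiv_hEquiv_pair (s : Fin 2 → G) :
    hEquiv (0 : Fin 1) (hEquiv (0 : Fin 1) s) = MulAut.conj (s 0 * s 1)⁻¹ ∘ s := by
  funext k
  fin_cases k <;> simp [hEquiv, mul_assoc]

theorem hEquiv_iterate_two_mul_pair (s : Fin 2 → G) (k : ℕ) :
    (hEquiv (0 : Fin 1))^[2 * k] s = MulAut.conj ((s 0 * s 1) ^ k)⁻¹ ∘ s := by
  induction k with
  | zero => simp
  | succ k ih =>
    rw [mul_add_one, add_comm, iterate_add_apply, ih]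
    change hEquiv (0 : Fin 1) (hEquiv (0 : Fin 1) ((MulAut.conj _).toMonoidHom ∘ s)) = _
    rw [hEquiv_monoidHom_comp, hEquiv_monoidHom_comp, hEquiv_hEquiv_pair]
    funext i
    simp [pow_succ', mul_assoc]

theorem isPeriodicPt_hEquiv_two_mul_iff (s : Fin 2 → G) (k : ℕ) :
    IsPeriodicPt (hEquiv (0 : Fin 1)) (2 * k) s ↔ Commute ((s 0 * s 1) ^ k) (s 0) := by
  have conj_eq_self_iff (c x : G) : MulAut.conj c⁻¹ x = x ↔ Commute c x := by
    rw [MulAut.conj_apply, inv_inv, mul_assoc, inv_mul_eq_iff_eq_mul, eq_comm, Commute, SemiconjBy]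
  rw [IsPeriodicPt, IsFixedPt, hEquiv_iterate_two_mul_pair, funext_iff, Fin.forall_fin_two,
    comp_apply, comp_apply, conj_eq_self_iff, conj_eq_self_iff, and_iff_left_iff_imp]
  intro h
  have h_prod : Commute ((s 0 * s 1) ^ k) (s 0 * s 1) := Commute.pow_self _ k
  simpa using h.inv_right.mul_right h_prod

end HurwitzAction

section DeterminantOne

variable {R : Type*} [CommRing R]

theorem commute_coe_specialLinearGroup_iff {m : Type*} [Fintype m] [DecidableEq m]
    {g h : Matrix.SpecialLinearGroup m R} : Commute (g : Matrix m m R) h ↔ Commute g h := by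
  simp only [Commute, SemiconjBy, ← Matrix.SpecialLinearGroup.coe_mul]
  exact Subtype.val_inj

variable {A B : Matrix (Fin 2) (Fin 2) R}

theorem sq_eq_trace_smul_sub_one_of_det_eq_one (hA : A.det = 1) : A ^ 2 = A.trace • A - 1 := by
  nontriviality R
  have cayley_hamilton := A.aeval_self_charpoly
  simp only [Matrix.charpoly_fin_two, hA, map_add, map_sub, map_pow, map_mul, map_one,
    Polynomial.aeval_X, Polynomial.aeval_C, ← Algebra.smul_def] at cayley_hamilton
  rw [← sub_eq_zero, ← cayley_hamilton]
  abel

theorem pow_succ_eq_chebyshevS_of_det_eq_one (hA : A.det = 1) (n : ℕ) :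
    A ^ (n + 1) = (S R n).eval A.trace • A - (S R (n - 1)).eval A.trace • 1 := by
  induction n with
  | zero => simp
  | succ n ih =>
    rw [pow_succ, ih, sub_mul, smul_mul_assoc, ← sq, sq_eq_trace_smul_sub_one_of_det_eq_one hA,
      smul_mul_assoc, one_mul, Nat.cast_add_one, S_add_one, add_sub_cancel_right,
      Polynomial.eval_sub, Polynomial.eval_mul, Polynomial.eval_X]
    module

theorem cube_eq_neg_trace_smul_one (hA : A.det = 1) (htr : A.trace ^ 2 = 1) :
    A ^ 3 = -A.trace • 1 := by
  rw [pow_succ_eq_chebyshevS_of_det_eq_one hA 2]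
  simp [S_two, htr]

section Ordered

variable [LinearOrder R] [IsStrictOrderedRing R]

theorem abs_eval_chebyshevS_lt_abs_eval_succ {t : R} (ht : 2 ≤ |t|) (n : ℕ) :
    |(S R (n - 1)).eval t| < |(S R n).eval t| := by
  induction n with
  | zero => simp
  | succ n ih =>
    rw [Nat.cast_add_one, S_add_one, add_sub_cancel_right, Polynomial.eval_sub,
      Polynomial.eval_mul, Polynomial.eval_X]
    calc |(S R n).eval t|
        < 2 * |(S R n).eval t| - |(S R (n - 1)).eval t| := by linarith
      _ ≤ |t * (S R n).eval t| - |(S R (n - 1)).eval t| := by rw [abs_mul]; gcongr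
      _ ≤ |t * (S R n).eval t - (S R (n - 1)).eval t| := abs_sub_abs_le_abs_sub _ _

theorem commute_of_commute_pow_of_two_le_abs_trace (hA : A.det = 1) (htr : 2 ≤ |A.trace|) {n : ℕ}
    (hn : n ≠ 0) (h : Commute (A ^ n) B) : Commute A B := by
  obtain ⟨n, rfl⟩ := Nat.exists_eq_succ_of_ne_zero hn
  have coeff_ne_zero : (S R n).eval A.trace ≠ 0 :=
    abs_pos.mp ((abs_nonneg _).trans_lt (abs_eval_chebyshevS_lt_abs_eval_succ htr n))
  have h_smul : Commute ((S R n).eval A.trace • A) B := by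
    have h_add := h.add_left ((Commute.one_left B).smul_left ((S R (n - 1)).eval A.trace))
    rwa [pow_succ_eq_chebyshevS_of_det_eq_one hA, sub_add_cancel] at h_add
  rw [Commute, SemiconjBy, smul_mul_assoc, mul_smul_comm] at h_smul
  exact smul_right_injective _ coeff_ne_zero h_smul

end Ordered

theorem commute_sq_or_cube_of_commute_pow_of_det_eq_one {A B : Matrix (Fin 2) (Fin 2) ℤ}
    (hA : A.det = 1) {n : ℕ} (hn : n ≠ 0) (h : Commute (A ^ n) B) :
    Commute (A ^ 2) B ∨ Commute (A ^ 3) B := by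
  have trace_cases : 2 ≤ |A.trace| ∨ A.trace = 0 ∨ |A.trace| = 1 := by grind
  rcases trace_cases with htr | htr | htr
  · exact .inl ((commute_of_commute_pow_of_two_le_abs_trace hA htr hn h).pow_left 2)
  · left
    rw [sq_eq_trace_smul_sub_one_of_det_eq_one hA, htr, zero_smul, zero_sub]
    exact (Commute.one_left B).neg_left
  · right
    rw [cube_eq_neg_trace_smul_one hA (by rw [← sq_abs, htr, one_pow])]
    exact (Commute.one_left B).smul_left _

end DeterminantOne

theorem braidGen_braid_relation {m i : ℕ} (hi : 1 ≤ i) (him : i + 2 ≤ m) :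
    braidGen m i * braidGen m (i + 1) * braidGen m i =
      braidGen m (i + 1) * braidGen m i * braidGen m (i + 1) := by
  rw [braidGen, braidGen, dif_pos (by omega), dif_pos (by omega)]
  have h_rel := PresentedGroup.one_of_mem (rels := braidRels m)
    (.inr ⟨⟨i - 1, by omega⟩, ⟨i + 1 - 1, by omega⟩, .inl (by simp; omega), rfl⟩)
  rwa [map_mul, map_inv, mul_inv_eq_one] at h_rel

theorem conj_mul_inv_of_braid_relation {G : Type*} [Group G] {x y : G}
    (h : x * y * x = y * x * y) : x * (x * y⁻¹) * x⁻¹ = x * y⁻¹ * (y⁻¹ * x)⁻¹ := by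
  have h_conj : y * x * y⁻¹ = x⁻¹ * y * x := by
    rw [mul_inv_eq_iff_eq_mul, mul_assoc, mul_assoc, eq_inv_mul_iff_mul_eq]
    simpa only [mul_assoc] using h
  calc x * (x * y⁻¹) * x⁻¹
      = x * y⁻¹ * (y * x * y⁻¹) * x⁻¹ := by group
    _ = x * y⁻¹ * (y⁻¹ * x)⁻¹ := by rw [h_conj]; group

namespace BraidGroup

local notation "σ₁" => braidGen 3 1
local notation "σ₂" => braidGen 3 2

theorem closure_braidGen_three : Subgroup.closure {σ₁, σ₂} = ⊤ := by
  have range_of : Set.range (PresentedGroup.of (rels := braidRels 3)) = Set.range ![σ₁, σ₂] :=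
    congrArg Set.range (by funext i; fin_cases i <;> rfl)
  rw [← PresentedGroup.closure_range_of, range_of, Matrix.range_cons_cons_empty]

/-- Two elements that freely generate the commutator subgroup of `B₃`. -/
def commutatorGen : Fin 2 → BraidGroup 3 :=
  ![σ₁ * σ₂⁻¹, σ₂⁻¹ * σ₁]

/-- The subgroup generated by `commutatorGen`, through which commutators in `B₃` are expressed as
words in two letters. -/
def commutatorGenClosure : Subgroup (BraidGroup 3) :=
  Subgroup.closure (Set.range commutatorGen)

theorem commutatorGen_mem_closure (i : Fin 2) : commutatorGen i ∈ commutatorGenClosure :=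
  Subgroup.subset_closure ⟨i, rfl⟩

theorem commutatorGenClosure_le_iff {H : Subgroup (BraidGroup 3)} :
    commutatorGenClosure ≤ H ↔ commutatorGen 0 ∈ H ∧ commutatorGen 1 ∈ H := by
  rw [commutatorGenClosure, Subgroup.closure_le, Set.range_subset_iff, Fin.forall_fin_two]
  rfl

theorem conj_commutatorGen_zero :
    MulAut.conj σ₁ (commutatorGen 0) = commutatorGen 0 * (commutatorGen 1)⁻¹ :=
  conj_mul_inv_of_braid_relation (braidGen_braid_relation le_rfl le_rfl)

theorem conj_commutatorGen_one : MulAut.conj σ₁ (commutatorGen 1) = commutatorGen 0 := by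
  simp [commutatorGen, mul_assoc]

theorem braidGen_one_mem_normalizer :
    σ₁ ∈ Subgroup.normalizer (commutatorGenClosure : Set (BraidGroup 3)) := by
  have mem_zero := commutatorGen_mem_closure 0
  have mem_one := commutatorGen_mem_closure 1
  rw [Subgroup.mem_normalizer_iff_map_conj_eq]
  apply le_antisymm
  · rw [Subgroup.map_le_iff_le_comap, commutatorGenClosure_le_iff]
    constructor
    · change MulAut.conj σ₁ (commutatorGen 0) ∈ commutatorGenClosure
      rw [conj_commutatorGen_zero]
      exact mul_mem mem_zero (inv_mem mem_one)
    · change MulAut.conj σ₁ (commutatorGen 1) ∈ commutatorGenClosure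
      rw [conj_commutatorGen_one]
      exact mem_zero
  · have conj_inv_mul :
        MulAut.conj σ₁ ((commutatorGen 0)⁻¹ * commutatorGen 1) = commutatorGen 1 := by
      rw [map_mul, map_inv, conj_commutatorGen_zero, conj_commutatorGen_one]
      group
    exact commutatorGenClosure_le_iff.mpr
      ⟨⟨_, mem_one, conj_commutatorGen_one⟩,
        ⟨_, mul_mem (inv_mem mem_zero) mem_one, conj_inv_mul⟩⟩

theorem eq_top_of_commutatorGenClosure_le {H : Subgroup (BraidGroup 3)}
    (hle : commutatorGenClosure ≤ H) (h_one : σ₁ ∈ H) : H = ⊤ := by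
  have h_two : σ₂ ∈ H := by
    have h_gen := hle (commutatorGen_mem_closure 0)
    simpa [commutatorGen] using H.mul_mem (H.inv_mem h_gen) h_one
  rw [eq_top_iff, ← closure_braidGen_three, Subgroup.closure_le]
  exact Set.pair_subset h_one h_two

instance normal_commutatorGenClosure : commutatorGenClosure.Normal :=
  Subgroup.normalizer_eq_top_iff.mp
    (eq_top_of_commutatorGenClosure_le Subgroup.le_normalizer braidGen_one_mem_normalizer)

theorem commutator_le_commutatorGenClosure : commutator (BraidGroup 3) ≤ commutatorGenClosure := by
  have sup_eq_top : commutatorGenClosure ⊔ Subgroup.zpowers σ₁ = ⊤ :=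
    eq_top_of_commutatorGenClosure_le le_sup_left
      (Subgroup.mem_sup_right (Subgroup.mem_zpowers σ₁))
  exact Subgroup.Normal.commutator_le_of_self_sup_commutative_eq_top sup_eq_top inferInstance

/-- The representation of `B₃` on `ℤ²` sending the Artin generators to elementary matrices (the
reduced Burau representation at `-1`). -/
def toSL2 : BraidGroup 3 →* SL(2, ℤ) :=
  PresentedGroup.toGroup (f := ![ModularGroup.T, ⟨!![1, 0; -1, 1], by simp⟩]) (by
    rintro r (⟨i, j, h, rfl⟩ | ⟨i, j, h, rfl⟩)
    · omega
    · change Fin 2 at i j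
      fin_cases i <;> fin_cases j <;> simp at h <;> decide)

theorem coe_toSL2_commutatorGen_zero :
    (toSL2 (commutatorGen 0) : Matrix (Fin 2) (Fin 2) ℤ) = !![2, 1; 1, 1] := by
  decide

theorem coe_toSL2_commutatorGen_one :
    (toSL2 (commutatorGen 1) : Matrix (Fin 2) (Fin 2) ℤ) = !![1, 1; 1, 2] := by
  decide

/-- The ping-pong sets into which the `commutatorGen i` push: the matrices whose first column
`(p, q)` has slope `p / q` in `[1, ∞)` for `i = 0` and in `[0, 1)` for `i = 1`. Taking matrices
instead of vectors in `ℤ²` excludes the fixed point `0`. -/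
def attractingSector : Fin 2 → Set SL(2, ℤ) :=
  ![{g | 0 < g 1 0 ∧ g 1 0 ≤ g 0 0 ∨ g 0 0 ≤ g 1 0 ∧ g 1 0 < 0},
    {g | 0 ≤ g 0 0 ∧ g 0 0 < g 1 0 ∨ g 1 0 < g 0 0 ∧ g 0 0 ≤ 0}]

/-- The ping-pong sets for the inverses of the `commutatorGen i`: the slope `p / q` of the first
column lies in `[-1, 0)` for `i = 0` and in `{∞} ∪ (-∞, -1)` for `i = 1`. -/
def repellingSector : Fin 2 → Set SL(2, ℤ) :=
  ![{g | -g 1 0 ≤ g 0 0 ∧ g 0 0 < 0 ∨ 0 < g 0 0 ∧ g 0 0 ≤ -g 1 0},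
    {g | 0 ≤ g 1 0 ∧ g 1 0 < -g 0 0 ∨ -g 0 0 < g 1 0 ∧ g 1 0 ≤ 0}]

theorem pairwise_disjoint_attractingSector : Pairwise (Disjoint on attractingSector) := by
  intro i j hij
  rw [onFun, Set.disjoint_left]
  fin_cases i <;> fin_cases j <;> simp [attractingSector] at hij ⊢ <;> omega

theorem pairwise_disjoint_repellingSector : Pairwise (Disjoint on repellingSector) := by
  intro i j hij
  rw [onFun, Set.disjoint_left]
  fin_cases i <;> fin_cases j <;> simp [repellingSector] at hij ⊢ <;> omega

theorem disjoint_attractingSector_repellingSector (i j : Fin 2) :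
    Disjoint (attractingSector i) (repellingSector j) := by
  rw [Set.disjoint_left]
  fin_cases i <;> fin_cases j <;> simp [attractingSector, repellingSector] <;> omega

theorem toSL2_commutatorGen_smul_compl_subset (i : Fin 2) :
    toSL2 (commutatorGen i) • (repellingSector i)ᶜ ⊆ attractingSector i := by
  rintro _ ⟨g, hg, rfl⟩
  have column_ne_zero := (g.isCoprime_col 0).ne_zero_or_ne_zero
  fin_cases i <;>
    simp [coe_toSL2_commutatorGen_zero, coe_toSL2_commutatorGen_one, repellingSector,
      attractingSector, Matrix.mul_apply, Fin.sum_univ_two] at hg ⊢ <;>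
    omega

theorem injective_lift_toSL2_comp_commutatorGen :
    Injective (FreeGroup.lift (toSL2 ∘ commutatorGen)) := by
  have push := toSL2_commutatorGen_smul_compl_subset
  refine FreeGroup.injective_lift_of_ping_pong _ attractingSector repellingSector ?nonempty
    pairwise_disjoint_attractingSector pairwise_disjoint_repellingSector
    disjoint_attractingSector_repellingSector push ?pull
  case nonempty =>
    intro i
    have S_notMem : ModularGroup.S ∉ repellingSector i := by
      fin_cases i <;> simp [repellingSector]
    exact ⟨_, push i ⟨ModularGroup.S, S_notMem, rfl⟩⟩
  case pull =>
    rintro i _ ⟨g, hg, rfl⟩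
    by_contra h
    exact hg (by simpa using push i ⟨_, h, rfl⟩)

theorem eq_one_of_mem_commutator_of_toSL2_eq_one {g : BraidGroup 3}
    (hg : g ∈ commutator (BraidGroup 3)) (h : toSL2 g = 1) : g = 1 := by
  obtain ⟨w, rfl⟩ := FreeGroup.range_lift_eq_closure.ge (commutator_le_commutatorGenClosure hg)
  have lift_comp : FreeGroup.lift (toSL2 ∘ commutatorGen) =
      toSL2.comp (FreeGroup.lift commutatorGen) := by
    ext; simp
  have hw : FreeGroup.lift (toSL2 ∘ commutatorGen) w = 1 := by rw [lift_comp]; exact h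
  rw [(map_eq_one_iff _ injective_lift_toSL2_comp_commutatorGen).mp hw, map_one]

theorem commute_toSL2_iff {g h : BraidGroup 3} :
    Commute (toSL2 g) (toSL2 h) ↔ Commute g h := by
  refine ⟨fun hc => ?_, fun hc => hc.map toSL2⟩
  rw [← commutatorElement_eq_one_iff_commute] at hc ⊢
  exact eq_one_of_mem_commutator_of_toSL2_eq_one
    (Subgroup.commutator_mem_commutator trivial trivial) (by rw [map_commutatorElement, hc])

theorem commute_sq_or_cube_of_commute_pow {c a : BraidGroup 3} {n : ℕ} (hn : n ≠ 0)
    (h : Commute (c ^ n) a) : Commute (c ^ 2) a ∨ Commute (c ^ 3) a := by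
  simp only [← commute_toSL2_iff, ← commute_coe_specialLinearGroup_iff, map_pow,
    Matrix.SpecialLinearGroup.coe_pow] at h ⊢
  exact commute_sq_or_cube_of_commute_pow_of_det_eq_one (toSL2 c).det_coe hn h

end BraidGroup

/-- A degree `3`, length `2` braid system with finite Hurwitz orbit has
orbit of size at most `6`. -/
theorem hurwitzOrbit_card_le_six (s : Fin 2 → BraidGroup 3)
    (h : (hurwitzOrbit s).Finite) :
    (hurwitzOrbit s).ncard ≤ 6 := by
  have ncard_ne_zero : (hurwitzOrbit s).ncard ≠ 0 := ((Set.ncard_pos h).mpr ⟨s, 1, rfl⟩).ne'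
  rw [ncard_hurwitzOrbit_pair] at ncard_ne_zero ⊢
  have h_comm :=
    (isPeriodicPt_hEquiv_two_mul_iff s _).mp ((isPeriodicPt_minimalPeriod _ s).const_mul 2)
  rcases BraidGroup.commute_sq_or_cube_of_commute_pow ncard_ne_zero h_comm with h_sq | h_cube
  · have period_four := (isPeriodicPt_hEquiv_two_mul_iff s 2).mpr h_sq
    exact (period_four.minimalPeriod_le (by norm_num)).trans (by norm_num)
  · have period_six := (isPeriodicPt_hEquiv_two_mul_iff s 3).mpr h_cube
    exact period_six.minimalPeriod_le (by norm_num)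
end
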